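/- arXiv:1804.01589 — 2 statements merged into one kernel-verified Lean document; each statement's English description precedes it below -/
import Mathlib

section
/- With the generic-elements setup (G abelian, U a G-graded simple algebra finite-dimensional over F = Γ(U)_e, F_U the algebra of generic elements inside Ũ = F̃ ⊗_F U): the central localization S_U^{-1}F_U, where S_U = Z(M(F_U))_e \ {0}, is a G-graded simple algebra whose multiplication algebra M(S_U^{-1}F_U) satisfies an ordinary polynomial identity. -/
noncomputable section

variable (K : Type*) [Field K]
variable {G : Type*} [CommGroup G] [DecidableEq G]
variable {A : Type*} [NonUnitalNonAssocSemiring A] [Module K A]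
  [SMulCommClass K A A] [IsScalarTower K A A]

/-- `𝒜` is a `G`-grading of the (not necessarily associative or unital) algebra `A`. -/
def IsAlgGrading (𝒜 : G → Submodule K A) : Prop :=
  DirectSum.IsInternal 𝒜 ∧ ∀ (g h : G), ∀ a ∈ 𝒜 g, ∀ b ∈ 𝒜 h, a * b ∈ 𝒜 (g * h)

/-- A submodule is homogeneous if it is the sum of its intersections with the components. -/
def IsHomogSubmodule (𝒜 : G → Submodule K A) (I : Submodule K A) : Prop :=
  I = ⨆ g, I ⊓ 𝒜 g

/-- two-sided ideal of a nonassociative algebra -/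
def IsMulIdeal (I : Submodule K A) : Prop :=
  ∀ a : A, ∀ x ∈ I, a * x ∈ I ∧ x * a ∈ I

/-- graded simple: `A·A ≠ 0` and no nontrivial homogeneous ideals. -/
def IsGradedSimple (𝒜 : G → Submodule K A) : Prop :=
  (∃ a b : A, a * b ≠ 0) ∧
    ∀ I : Submodule K A, IsMulIdeal K I → IsHomogSubmodule K 𝒜 I → I = ⊥ ∨ I = ⊤

/-- The multiplication algebra: the subalgebra of `End_K A` generated by left and right
multiplications. -/
def MultAlg : NonUnitalSubalgebra K (Module.End K A) :=
  NonUnitalAlgebra.adjoin K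
    (Set.range (LinearMap.mulLeft K (A := A)) ∪ Set.range (LinearMap.mulRight K (A := A)))

/-- The homogeneous component of degree `h` of `End_K A`: maps sending `𝒜 g` into `𝒜 (h*g)`. -/
def endGrading (𝒜 : G → Submodule K A) (h : G) : Submodule K (Module.End K A) where
  carrier := {φ | ∀ g : G, ∀ x ∈ 𝒜 g, φ x ∈ 𝒜 (h * g)}
  add_mem' := fun hf hg g x hx => (𝒜 _).add_mem (hf g x hx) (hg g x hx)
  zero_mem' := fun g x hx => (𝒜 _).zero_mem
  smul_mem' := fun c f hf g x hx => (𝒜 _).smul_mem c (hf g x hx)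

/-- The centroid of `A`: endomorphisms commuting with all left and right multiplications. -/
def centroid : Submodule K (Module.End K A) where
  carrier := {φ | ∀ a x : A, φ (a * x) = a * φ x ∧ φ (x * a) = φ x * a}
  add_mem' := by
    intro f g hf hg a x
    refine ⟨?_, ?_⟩ <;>
      simp [LinearMap.add_apply, (hf a x).1, (hg a x).1, (hf a x).2, (hg a x).2, mul_add, add_mul]
  zero_mem' := by intro a x; simp
  smul_mem' := by
    intro c f hf a x
    refine ⟨?_, ?_⟩ <;>
      simp [LinearMap.smul_apply, (hf a x).1, (hf a x).2, mul_smul_comm, smul_mul_assoc]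

/-- The graded centroid `Γ(A)`: the sums of homogeneous centroid elements. -/
def gradedCentroid (𝒜 : G → Submodule K A) : Submodule K (Module.End K A) :=
  ⨆ h : G, centroid K ⊓ endGrading K 𝒜 h

/-- graded polynomial identity, variables indexed by `G × ℕ`, the variable `(g, i)` having
degree `g`. -/
def IsGradedPI (𝒜 : G → Submodule K A) (f : FreeNonUnitalNonAssocAlgebra K (G × ℕ)) : Prop :=
  ∀ v : G × ℕ → A, (∀ p, v p ∈ 𝒜 p.1) → FreeNonUnitalNonAssocAlgebra.lift K v f = 0

/-- ordinary polynomial identity of a not necessarily associative algebra -/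
def IsPI (f : FreeNonUnitalNonAssocAlgebra K ℕ) : Prop :=
  ∀ v : ℕ → A, FreeNonUnitalNonAssocAlgebra.lift K v f = 0

/-- A subset `S` of an associative unital `K`-algebra `B` satisfies an ordinary polynomial
identity. -/
def SatisfiesOrdinaryPI {B : Type*} [Semiring B] [Algebra K B] (S : Set B) : Prop :=
  ∃ f : FreeAlgebra K ℕ, f ≠ 0 ∧
    ∀ v : ℕ → B, (∀ i, v i ∈ S) → FreeAlgebra.lift K v f = 0

/-- isomorphism of `G`-graded algebras -/
def IsGradedIso {B : Type*} [NonUnitalNonAssocSemiring B] [Module K B]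
    (𝒜 : G → Submodule K A) (ℬ : G → Submodule K B) : Prop :=
  ∃ ψ : A ≃ₗ[K] B, (∀ x y : A, ψ (x * y) = ψ x * ψ y) ∧
    ∀ g : G, (𝒜 g).map (ψ : A →ₗ[K] B) = ℬ g

end

noncomputable section

variable (K : Type*) [Field K]

/-- `f` is an ordinary (associative) polynomial identity of the subset `S` of the associative
unital algebra `B`. -/
def IsAssocPIOn {B : Type*} [Semiring B] [Algebra K B] (S : Set B) (f : FreeAlgebra K ℕ) : Prop :=
  ∀ v : ℕ → B, (∀ i, v i ∈ S) → FreeAlgebra.lift K v f = 0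

end

noncomputable section

open TensorProduct

variable (F : Type*) [Field F] {G : Type*} [CommGroup G] [DecidableEq G]
variable (FF : Type*) [Field FF] [Algebra F FF] [Algebra (MvPolynomial (G × ℕ × ℕ) F) FF]
  [IsScalarTower F (MvPolynomial (G × ℕ × ℕ) F) FF]
variable {A : Type*} [NonUnitalNonAssocRing A] [Module F A] [SMulCommClass F A A]
  [IsScalarTower F A A]

/-- the set of generic elements `y_i^g = ∑_j t_{ij}^g ⊗ u_j^g` of `Ũ = FF ⊗ U`,
relative to the choice of bases `bU g` of the homogeneous components. -/
def genericElems (𝒜 : G → Submodule F A) (nU : G → ℕ)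
    (bU : ∀ g : G, Module.Basis (Fin (nU g)) F (𝒜 g)) : Set (FF ⊗[F] A) :=
  {x | ∃ (g : G) (i : Fin (nU g)), x = ∑ j : Fin (nU g),
    (algebraMap (MvPolynomial (G × ℕ × ℕ) F) FF (MvPolynomial.X (g, (i : ℕ), (j : ℕ)))) ⊗ₜ[F]
      ((bU g j : A))}

/-- the algebra of generic elements `F_U`, an `F`-subalgebra of `Ũ = FF ⊗ U`. -/
def genericAlg (𝒜 : G → Submodule F A) (nU : G → ℕ)
    (bU : ∀ g : G, Module.Basis (Fin (nU g)) F (𝒜 g)) : NonUnitalSubalgebra F (FF ⊗[F] A) :=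
  NonUnitalAlgebra.adjoin F (genericElems F FF 𝒜 nU bU)

/-- the degree-`g` component of an `F`-subalgebra `L` of `Ũ = FF ⊗ U`, induced by the grading
of `Ũ`. -/
def subComp (𝒜 : G → Submodule F A) (L : NonUnitalSubalgebra F (FF ⊗[F] A)) (g : G) :
    Submodule F ↥L where
  carrier := {x | (x : FF ⊗[F] A) ∈ (𝒜 g).baseChange FF}
  add_mem' := fun {x y} hx hy => by
    simpa using (((𝒜 g).baseChange FF).restrictScalars F).add_mem hx hy
  zero_mem' := by simp
  smul_mem' := fun c x hx => by
    simpa using (((𝒜 g).baseChange FF).restrictScalars F).smul_mem c hx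

/-- the degree-`e` component `Z(M(F_U))_e` of the center of the multiplication algebra of an
`F`-subalgebra `L` of `Ũ` (applied below to `L = F_U` and to its central localization). -/
def centerMultE (𝒜 : G → Submodule F A) (L : NonUnitalSubalgebra F (FF ⊗[F] A)) :
    Set (Module.End F ↥L) :=
  {m | m ∈ MultAlg F (A := ↥L) ∧ (∀ m' ∈ MultAlg F (A := ↥L), m * m' = m' * m) ∧
    m ∈ endGrading F (subComp F FF 𝒜 L) 1}

end

open TensorProduct

/-! ### Polynomial identities of finite dimensional algebras -/

lemma stdPoly_ne_zero (F : Type*) [Field F] (d : ℕ) :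
    (∑ s : Equiv.Perm (Fin d), Equiv.Perm.sign s •
      (List.ofFn fun i => FreeAlgebra.ι F ((s i : Fin d) : ℕ)).prod) ≠ 0 := by
  classical
  intro h
  have h2 := congrArg (FreeAlgebra.equivMonoidAlgebraFreeMonoid (R := F) (X := ℕ)) h
  have key : ∀ s : Equiv.Perm (Fin d), FreeAlgebra.equivMonoidAlgebraFreeMonoid (R := F) (X := ℕ)
      (List.ofFn fun i => FreeAlgebra.ι F ((s i : Fin d) : ℕ)).prod =
      MonoidAlgebra.single (FreeMonoid.ofList (List.ofFn fun i => ((s i : Fin d) : ℕ))) 1 := by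
    intro s
    have : ∀ l : List ℕ, FreeAlgebra.equivMonoidAlgebraFreeMonoid (R := F) (X := ℕ)
      (l.map (FreeAlgebra.ι F)).prod = MonoidAlgebra.single (FreeMonoid.ofList l) 1 := by
      intro l
      induction l with
      | nil => simp [MonoidAlgebra.one_def]
      | cons a l ih =>
        rw [List.map_cons, List.prod_cons, map_mul, ih]
        have : FreeAlgebra.equivMonoidAlgebraFreeMonoid (R := F) (X := ℕ) (FreeAlgebra.ι F a)
          = MonoidAlgebra.single (FreeMonoid.of a) 1 := by
          simp [FreeAlgebra.equivMonoidAlgebraFreeMonoid, MonoidAlgebra.of]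
        rw [this, MonoidAlgebra.single_mul_single, one_mul, FreeMonoid.ofList_cons]
    rw [← this, List.map_ofFn]; rfl
  rw [map_sum, map_zero] at h2
  have h3 : ∀ s : Equiv.Perm (Fin d), FreeAlgebra.equivMonoidAlgebraFreeMonoid (R := F) (X := ℕ)
      (Equiv.Perm.sign s • (List.ofFn fun i => FreeAlgebra.ι F ((s i : Fin d) : ℕ)).prod) =
      MonoidAlgebra.single (FreeMonoid.ofList (List.ofFn fun i => ((s i : Fin d) : ℕ)))
        ((Equiv.Perm.sign s : ℤ) : F) := by
    intro s
    rw [Units.smul_def, map_zsmul, key, ← Int.cast_smul_eq_zsmul F, MonoidAlgebra.smul_single]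
    simp
  rw [Finset.sum_congr rfl (fun s _ => h3 s)] at h2
  have h4 := congrArg (fun f : MonoidAlgebra F (FreeMonoid ℕ) =>
    f.coeff (FreeMonoid.ofList (List.ofFn fun i : Fin d => (i : ℕ)))) h2
  simp only [MonoidAlgebra.coeff_sum, MonoidAlgebra.coeff_single, Finsupp.coe_finset_sum,
    Finset.sum_apply, MonoidAlgebra.coeff_zero, Finsupp.coe_zero, Pi.zero_apply] at h4
  rw [Finset.sum_eq_single (1 : Equiv.Perm (Fin d))] at h4
  · simp at h4
  · intro s _ hs
    rw [Finsupp.single_apply, if_neg]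
    intro he
    apply hs
    have := FreeMonoid.ofList.injective he
    rw [List.ofFn_inj] at this
    ext i
    exact congrFun this i
  · simp

lemma stdPoly_eval {F E : Type*} [Field F] {K : Type*} [Field K] [Ring E] [Algebra F E]
    [Algebra K E] [FiniteDimensional K E] (v : ℕ → E) :
    FreeAlgebra.lift F v (∑ s : Equiv.Perm (Fin (Module.finrank K E + 1)), Equiv.Perm.sign s •
      (List.ofFn fun i => FreeAlgebra.ι F ((s i : Fin _) : ℕ)).prod) = 0 := by
  have h := AlternatingMap.map_linearDependent
    (MultilinearMap.alternatization (MultilinearMap.mkPiAlgebraFin K (Module.finrank K E + 1) E))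
    (fun i => v i) (by
      intro hl
      have := hl.fintype_card_le_finrank
      simp at this)
  rw [MultilinearMap.alternatization_apply] at h
  rw [map_sum, ← h]
  refine Finset.sum_congr rfl fun s _ => ?_
  rw [Units.smul_def, Units.smul_def, map_zsmul]
  congr 1
  rw [map_list_prod, List.map_ofFn]
  simp only [MultilinearMap.domDomCongr_apply, MultilinearMap.mkPiAlgebraFin_apply]
  congr 2
  ext i
  simp

/-- extension of multiplication operators to the ambient algebra -/
lemma multAlg_extend {F FF A : Type*} [Field F] [Field FF] [Algebra F FF]
    [NonUnitalNonAssocRing A] [Module F A] [SMulCommClass F A A] [IsScalarTower F A A]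
    (S : NonUnitalSubalgebra F (FF ⊗[F] A)) (m : Module.End F ↥S)
    (hm : m ∈ MultAlg F (A := ↥S)) :
    ∃ M : Module.End FF (FF ⊗[F] A), (∀ x : ↥S, M (x : FF ⊗[F] A) = ((m x : ↥S) : FF ⊗[F] A)) ∧
      ∀ I : Submodule F (FF ⊗[F] A), (∀ a ∈ S, ∀ x ∈ I, a * x ∈ I ∧ x * a ∈ I) →
        ∀ x ∈ I, M x ∈ I := by
  unfold MultAlg at hm
  induction hm using NonUnitalAlgebra.adjoin_induction with
  | mem x hx =>
    rcases hx with ⟨a, rfl⟩ | ⟨a, rfl⟩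
    · exact ⟨LinearMap.mulLeft FF (a : FF ⊗[F] A), fun x => by simp,
        fun I hI x hx => (hI a a.2 x hx).1⟩
    · exact ⟨LinearMap.mulRight FF (a : FF ⊗[F] A), fun x => by simp,
        fun I hI x hx => (hI a a.2 x hx).2⟩
  | add x y hx hy h1 h2 =>
    obtain ⟨M1, h1, h1'⟩ := h1
    obtain ⟨M2, h2, h2'⟩ := h2
    exact ⟨M1 + M2, fun x => by simp [h1, h2],
      fun I hI x hx => I.add_mem (h1' I hI x hx) (h2' I hI x hx)⟩
  | zero => exact ⟨0, fun x => by simp, fun I hI x hx => by simp⟩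
  | mul x y hx hy h1 h2 =>
    obtain ⟨M1, h1, h1'⟩ := h1
    obtain ⟨M2, h2, h2'⟩ := h2
    exact ⟨M1 * M2, fun x => by simp [h1, h2],
      fun I hI x hx => h1' I hI _ (h2' I hI x hx)⟩
  | smul r x hx h1 =>
    obtain ⟨M1, h1, h1'⟩ := h1
    exact ⟨r • M1, fun x => by simp [h1], fun I hI x hx => I.smul_mem r (h1' I hI x hx)⟩

lemma multAlg_PI {F FF A : Type*} [Field F] [Field FF] [Algebra F FF]
    [NonUnitalNonAssocRing A] [Module F A] [SMulCommClass F A A] [IsScalarTower F A A]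
    [FiniteDimensional F A] (S : NonUnitalSubalgebra F (FF ⊗[F] A)) :
    SatisfiesOrdinaryPI F (MultAlg F (A := ↥S) : Set (Module.End F ↥S)) := by
  refine ⟨_, stdPoly_ne_zero F (Module.finrank FF (Module.End FF (FF ⊗[F] A)) + 1), ?_⟩
  intro v hv
  choose V hV _ using fun i => multAlg_extend S (v i) (hv i)
  have key : ∀ f : FreeAlgebra F ℕ, ∀ x : ↥S, FreeAlgebra.lift F V f (x : FF ⊗[F] A) =
      ((FreeAlgebra.lift F v f x : ↥S) : FF ⊗[F] A) := by
    intro f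
    induction f using FreeAlgebra.induction with
    | grade0 r => intro x; simp
    | grade1 i => intro x; simp [hV]
    | mul a b ha hb => intro x; simp [ha, hb]
    | add a b ha hb => intro x; simp [ha, hb]
  ext x
  have h := stdPoly_eval (F := F) (K := FF) (E := Module.End FF (FF ⊗[F] A)) V
  rw [← key]
  exact LinearMap.congr_fun h (x : FF ⊗[F] A)

/-! ### Graded simplicity of the scalar extension -/

section ext
variable {F FF A : Type*} [Field F] [Field FF] [Algebra F FF]
    [NonUnitalNonAssocRing A] [Module F A] [SMulCommClass F A A] [IsScalarTower F A A]

/-- evaluation of a functional on the first tensor factor -/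
noncomputable def tco (F FF A : Type*) [Field F] [Field FF] [Algebra F FF]
    [NonUnitalNonAssocRing A] [Module F A] : FF ⊗[F] A →ₗ[F] (FF →ₗ[F] F) →ₗ[F] A :=
  ((LinearMap.llcomp F _ _ _ (TensorProduct.lid F A).toLinearMap) ∘ₗ
    (LinearMap.rTensorHom A)).flip

lemma tco_tmul (c : FF) (a : A) (l : FF →ₗ[F] F) : tco F FF A (c ⊗ₜ a) l = l c • a := by
  simp [tco]

lemma tco_baseChange (m : Module.End F A) (x : FF ⊗[F] A) (l : FF →ₗ[F] F) :
    tco F FF A (m.baseChange FF x) l = m (tco F FF A x l) := by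
  induction x with
  | zero => simp
  | tmul c a => simp [tco_tmul]
  | add x y hx hy => simp [hx, hy]

lemma tco_mem (N : Submodule F A) (x : FF ⊗[F] A) (hx : x ∈ N.baseChange FF) (l : FF →ₗ[F] F) :
    tco F FF A x l ∈ N := by
  rw [Submodule.baseChange_eq_span] at hx
  revert l
  induction hx using Submodule.span_induction with
  | mem x hx => 
    obtain ⟨a, ha, rfl⟩ := hx
    intro l
    simp only [TensorProduct.mk_apply, tco_tmul]
    exact N.smul_mem _ ha
  | zero => simp
  | add x y _ _ h1 h2 => intro l; simpa using N.add_mem (h1 l) (h2 l)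
  | smul c x _ h =>
    intro l
    have : tco F FF A (c • x) l = tco F FF A x (l ∘ₗ LinearMap.mulLeft F c) := by
      clear h
      rename_i hmem
      clear hmem
      induction x with
      | zero => simp
      | tmul c a => simp [tco_tmul, TensorProduct.smul_tmul']
      | add x y hx hy => rw [smul_add, map_add, map_add, LinearMap.add_apply, LinearMap.add_apply, hx, hy]
    rw [this]
    exact h _

lemma tco_expand (x : FF ⊗[F] A) :
    ∃ (s : Finset (Module.Basis.ofVectorSpaceIndex F FF)),
      x = ∑ i ∈ s, (Module.Basis.ofVectorSpace F FF i) ⊗ₜ[F]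
        tco F FF A x ((Module.Basis.ofVectorSpace F FF).coord i) := by
  classical
  obtain ⟨c, hc⟩ := TensorProduct.eq_repr_basis_left (Module.Basis.ofVectorSpace F FF) x
  refine ⟨c.support, ?_⟩
  conv_lhs => rw [← hc, Finsupp.sum]
  refine Finset.sum_congr rfl fun i hi => ?_
  congr 1
  rw [← hc, Finsupp.sum, map_sum, LinearMap.sum_apply]
  rw [Finset.sum_eq_single i]
  · rw [tco_tmul, Module.Basis.coord_apply, Module.Basis.repr_self, Finsupp.single_eq_same, one_smul]
  · intro j _ hj
    rw [tco_tmul, Module.Basis.coord_apply, Module.Basis.repr_self, Finsupp.single_apply,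
      if_neg hj, zero_smul]
  · intro h; exact absurd hi h

lemma tco_eq_zero (x : FF ⊗[F] A) (h : ∀ l, tco F FF A x l = 0) : x = 0 := by
  obtain ⟨s, hs⟩ := tco_expand x
  rw [hs]; simp [h]

lemma baseChange_mem {N N' : Submodule F A} (m : Module.End F A) (h : ∀ x ∈ N, m x ∈ N')
    (x : FF ⊗[F] A) (hx : x ∈ N.baseChange FF) : m.baseChange FF x ∈ N'.baseChange FF := by
  rw [Submodule.baseChange_eq_span] at hx
  induction hx using Submodule.span_induction with
  | mem x hx => 
    obtain ⟨a, ha, rfl⟩ := hx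
    simpa using Submodule.tmul_mem_baseChange_of_mem 1 (h a ha)
  | zero => simp
  | add x y _ _ h1 h2 => rw [map_add]; exact add_mem h1 h2
  | smul c x _ h => rw [map_smul]; exact Submodule.smul_mem _ c h

lemma baseChange_mulLeft (a : A) (x : FF ⊗[F] A) :
    (LinearMap.mulLeft F a).baseChange FF x = ((1 : FF) ⊗ₜ[F] a) * x := by
  induction x with
  | zero => simp
  | tmul c a => simp
  | add x y hx hy => simp [hx, hy, mul_add]

lemma baseChange_mulRight (a : A) (x : FF ⊗[F] A) :
    (LinearMap.mulRight F a).baseChange FF x = x * ((1 : FF) ⊗ₜ[F] a) := by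
  induction x with
  | zero => simp
  | tmul c a => simp
  | add x y hx hy => simp [hx, hy, add_mul]

variable {G : Type*} [CommGroup G] [DecidableEq G]

/-- homogeneous endomorphisms stabilizing `J` -/
noncomputable def stabEnd (𝒜 : G → Submodule F A) (J : Submodule FF (FF ⊗[F] A)) (h : G) :
    Submodule F (Module.End F A) where
  carrier := {m | (∀ x ∈ J, m.baseChange FF x ∈ J) ∧ m ∈ endGrading F 𝒜 h}
  add_mem' := by
    rintro a b ⟨h1, h2⟩ ⟨h3, h4⟩
    refine ⟨fun x hx => ?_, add_mem h2 h4⟩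
    rw [LinearMap.baseChange_add, LinearMap.add_apply]; exact add_mem (h1 x hx) (h3 x hx)
  zero_mem' := ⟨fun x hx => by simp, zero_mem _⟩
  smul_mem' := by
    rintro c a ⟨h1, h2⟩
    refine ⟨fun x hx => ?_, Submodule.smul_mem _ _ h2⟩
    rw [LinearMap.baseChange_smul, LinearMap.smul_apply]
    exact Submodule.smul_of_tower_mem J c (h1 x hx)

lemma exists_homog_sum {𝒜 : G → Submodule F A} (hgr : IsAlgGrading F 𝒜) (p : A → Prop)
    (hp : ∀ g, ∀ a ∈ 𝒜 g, p a) (h0 : p 0) (hadd : ∀ a b, p a → p b → p (a + b)) (a : A) : p a := by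
  have : a ∈ ⨆ g, 𝒜 g := by rw [hgr.1.submodule_iSup_eq_top]; trivial
  induction this using Submodule.iSup_induction' with
  | mem g a ha => exact hp g a ha
  | zero => exact h0
  | add x y _ _ h1 h2 => exact hadd _ _ h1 h2

theorem ext_graded_simple [FiniteDimensional F A]
    (𝒜 : G → Submodule F A) (hgr : IsAlgGrading F 𝒜) (hsimp : IsGradedSimple F 𝒜)
    (hbase : ∀ φ : Module.End F A,
      φ ∈ centroid F (A := A) ⊓ endGrading F 𝒜 1 ↔ ∃ c : F, φ = c • (1 : Module.End F A))
    (J : Submodule FF (FF ⊗[F] A))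
    (hJ : ∀ a : A, ∀ x ∈ J, ((1 : FF) ⊗ₜ[F] a) * x ∈ J ∧ x * ((1 : FF) ⊗ₜ[F] a) ∈ J)
    (hx : ∃ g, ∃ x ∈ J, x ∈ (𝒜 g).baseChange FF ∧ x ≠ 0) : J = ⊤ := by
  classical
  -- an element of minimal rank
  have hex : ∃ n : ℕ, ∃ g, ∃ x ∈ J, x ∈ (𝒜 g).baseChange FF ∧ x ≠ 0 ∧
      Module.finrank F (LinearMap.range (tco F FF A x)) = n := by
    obtain ⟨g, x, h1, h2, h3⟩ := hx
    exact ⟨_, g, x, h1, h2, h3, rfl⟩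
  obtain ⟨g, x, hxJ, hxg, hx0, hxn⟩ := Nat.find_spec hex
  have hmin : ∀ g, ∀ y ∈ J, y ∈ (𝒜 g).baseChange FF → y ≠ 0 →
      Module.finrank F (LinearMap.range (tco F FF A x)) ≤
      Module.finrank F (LinearMap.range (tco F FF A y)) := by
    intro g y h1 h2 h3
    rw [hxn]
    exact Nat.find_min' hex ⟨g, y, h1, h2, h3, rfl⟩
  obtain ⟨l0, hl0⟩ : ∃ l0, tco F FF A x l0 ≠ 0 := by
    by_contra! h
    exact hx0 (tco_eq_zero x h)
  set x0 := tco F FF A x l0 with hx0def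
  have hx0g : x0 ∈ 𝒜 g := tco_mem _ _ hxg _
  -- the key property
  have hkey : ∀ h, ∀ m ∈ stabEnd 𝒜 J h, m x0 = 0 → ∀ l, m (tco F FF A x l) = 0 := by
    intro h m hm hm0 l
    by_contra hne
    have hy0 : m.baseChange FF x ≠ 0 := by
      intro h0
      apply hne
      rw [← tco_baseChange, h0]; simp
    have hle := hmin (h * g) (m.baseChange FF x) (hm.1 x hxJ)
      (baseChange_mem m (fun z hz => hm.2 g z hz) x hxg) hy0
    have hr : LinearMap.range (tco F FF A (m.baseChange FF x)) =
        LinearMap.range (m ∘ₗ (LinearMap.range (tco F FF A x)).subtype) := by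
      rw [LinearMap.range_comp, Submodule.range_subtype, ← LinearMap.range_comp]
      congr 1
      ext l
      simp [tco_baseChange]
    rw [hr] at hle
    have hrn := LinearMap.finrank_range_add_finrank_ker
      (m ∘ₗ (LinearMap.range (tco F FF A x)).subtype)
    have hker : 0 < Module.finrank F
        (LinearMap.ker (m ∘ₗ (LinearMap.range (tco F FF A x)).subtype)) := by
      rw [Module.finrank_pos_iff_exists_ne_zero]
      refine ⟨⟨⟨x0, l0, rfl⟩, by simpa using hm0⟩, ?_⟩
      intro h
      apply hl0
      exact congrArg Subtype.val (congrArg Subtype.val h)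
    omega
  set S : Submodule F (Module.End F A) := ⨆ h, stabEnd 𝒜 J h with hS
  have hSJ : ∀ m ∈ S, ∀ x ∈ J, m.baseChange FF x ∈ J := by
    intro m hm
    induction hm using Submodule.iSup_induction' with
    | mem h m hm => exact hm.1
    | zero => intro x hx; simp
    | add a b _ _ h1 h2 =>
      intro x hx
      rw [LinearMap.baseChange_add, LinearMap.add_apply]; exact add_mem (h1 x hx) (h2 x hx)
  have hSL : ∀ a : A, ∀ m ∈ S, LinearMap.mulLeft F a * m ∈ S := by
    intro a m hm
    induction a using exists_homog_sum hgr with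
    | hp k a ha =>
      induction hm using Submodule.iSup_induction' with
      | mem h m hm =>
        refine Submodule.mem_iSup_of_mem (k * h) ⟨fun x hx => ?_, fun g x hx => ?_⟩
        · rw [LinearMap.baseChange_mul, Module.End.mul_apply, baseChange_mulLeft]
          exact (hJ a _ (hm.1 x hx)).1
        · rw [mul_assoc]; exact hgr.2 _ _ a ha _ (hm.2 g x hx)
      | zero => simp
      | add a b _ _ h1 h2 => rw [mul_add]; exact add_mem h1 h2
    | h0 => simp
    | hadd a b h1 h2 =>
      have : LinearMap.mulLeft F (a + b) = LinearMap.mulLeft F a + LinearMap.mulLeft F b := by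
        ext; simp [add_mul]
      rw [this, add_mul]; exact add_mem h1 h2
  have hSR : ∀ a : A, ∀ m ∈ S, LinearMap.mulRight F a * m ∈ S := by
    intro a m hm
    induction a using exists_homog_sum hgr with
    | hp k a ha =>
      induction hm using Submodule.iSup_induction' with
      | mem h m hm =>
        refine Submodule.mem_iSup_of_mem (k * h) ⟨fun x hx => ?_, fun g x hx => ?_⟩
        · rw [LinearMap.baseChange_mul, Module.End.mul_apply, baseChange_mulRight]
          exact (hJ a _ (hm.1 x hx)).2
        · rw [mul_assoc, mul_comm]; exact hgr.2 _ _ _ (hm.2 g x hx) a ha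
      | zero => simp
      | add a b _ _ h1 h2 => rw [mul_add]; exact add_mem h1 h2
    | h0 => simp
    | hadd a b h1 h2 =>
      have : LinearMap.mulRight F (a + b) = LinearMap.mulRight F a + LinearMap.mulRight F b := by
        ext; simp [mul_add]
      rw [this, add_mul]; exact add_mem h1 h2
  have h1S : (1 : Module.End F A) ∈ S := by
    refine Submodule.mem_iSup_of_mem 1 ⟨fun x hx => ?_, fun g x hx => ?_⟩
    · simpa using hx
    · simpa using hx
  -- every element of `A` is of the form `m x0`
  have hsurj : ∀ y : A, ∃ m ∈ S, m x0 = y := by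
    have hI : S.map (LinearMap.applyₗ (R := F) x0) = ⊤ := by
      refine (hsimp.2 (S.map (LinearMap.applyₗ (R := F) x0)) ?_ ?_).resolve_left ?_
      · rintro a _ ⟨m, hm, rfl⟩
        exact ⟨⟨_, hSL a m hm, by simp⟩, ⟨_, hSR a m hm, by simp⟩⟩
      · refine le_antisymm ?_ (iSup_le fun g => inf_le_left)
        rintro _ ⟨m, hm, rfl⟩
        induction hm using Submodule.iSup_induction' with
        | mem h m hm =>
          refine Submodule.mem_iSup_of_mem (h * g) ⟨⟨m, Submodule.mem_iSup_of_mem h hm, rfl⟩, ?_⟩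
          exact hm.2 g x0 hx0g
        | zero => simp
        | add a b _ _ h1 h2 => rw [map_add]; exact add_mem h1 h2
      · intro hb
        apply hl0
        have : x0 ∈ S.map (LinearMap.applyₗ (R := F) x0) := ⟨1, h1S, by simp⟩
        rw [hb] at this
        simpa using this
    intro y
    have : y ∈ S.map (LinearMap.applyₗ (R := F) x0) := by rw [hI]; trivial
    obtain ⟨m, hm, rfl⟩ := this
    exact ⟨m, hm, rfl⟩
  have hdec : ∀ m ∈ S, ∃ f : Π₀ h, stabEnd 𝒜 J h, m = f.sum fun _ z => (z : Module.End F A) := by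
    intro m hm
    rw [hS, Submodule.mem_iSup_iff_exists_dfinsupp'] at hm
    obtain ⟨f, hf⟩ := hm
    exact ⟨f, hf.symm⟩
  have hind : ∀ (f : Π₀ h, stabEnd 𝒜 J h) (k : G) (y : A), y ∈ 𝒜 (k * g) →
      (f.sum fun _ z => (z : Module.End F A)) x0 = y →
      (f k : Module.End F A) x0 = y ∧ ∀ h, h ≠ k → (f h : Module.End F A) x0 = 0 := by
    intro f k y hy hf
    have hi := (DirectSum.isInternal_submodule_iff_iSupIndep_and_iSup_eq_top 𝒜).1 hgr.1
    have hi2 : iSupIndep fun h : G => 𝒜 (h * g) := hi.1.comp (mul_left_injective g)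
    rw [DFinsupp.sum, LinearMap.sum_apply] at hf
    set w : G → A := fun h => (f h : Module.End F A) x0 - if h = k then y else 0 with hw
    have hwz : ∀ h ∈ insert k f.support, w h = 0 := by
      refine (iSupIndep_iff_finsetSum_eq_zero_imp_eq_zero _).1 hi2 _ w ?_ ?_
      · intro h _
        refine sub_mem ((f h).2.2 g x0 hx0g) ?_
        split_ifs with hh
        · rw [hh]; exact hy
        · exact zero_mem _
      · rw [hw, Finset.sum_sub_distrib, Finset.sum_ite_eq', if_pos (Finset.mem_insert_self _ _),
          sub_eq_zero, ← hf]
        symm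
        apply Finset.sum_subset (Finset.subset_insert _ _)
        intro h _ hh
        simp only [DFinsupp.mem_support_toFun, not_not] at hh
        simp [hh]
    constructor
    · simpa [hw, sub_eq_zero] using hwz k (Finset.mem_insert_self _ _)
    · intro h hh
      by_cases hs : h ∈ f.support
      · simpa [hw, hh] using hwz h (Finset.mem_insert_of_mem hs)
      · simp only [DFinsupp.mem_support_toFun, not_not] at hs
        simp [hs]
  have hwd : ∀ m ∈ S, m x0 = 0 → ∀ l, m (tco F FF A x l) = 0 := by
    intro m hm hm0 l
    obtain ⟨f, rfl⟩ := hdec m hm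
    have := hind f 1 0 (zero_mem _) hm0
    rw [DFinsupp.sum, LinearMap.sum_apply]
    refine Finset.sum_eq_zero fun h _ => hkey h _ (f h).2 ?_ l
    by_cases hh : h = 1
    · rw [hh]; exact this.1
    · exact this.2 h hh
  -- the centroid element
  have hphi : ∀ l, ∃ c : F, tco F FF A x l = c • x0 := by
    intro l
    choose r hrS hr using hsurj
    have hwd2 : ∀ m ∈ S, ∀ n ∈ S, m x0 = n x0 → m (tco F FF A x l) = n (tco F FF A x l) := by
      intro m hm n hn h
      have := hwd (m - n) (sub_mem hm hn) (by simp [h]) l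
      simpa [sub_eq_zero] using this
    let φ : Module.End F A :=
      { toFun := fun y => r y (tco F FF A x l)
        map_add' := fun y z => by
          rw [← LinearMap.add_apply]
          exact hwd2 _ (hrS _) _ (add_mem (hrS _) (hrS _)) (by simp [hr])
        map_smul' := fun c y => by
          rw [RingHom.id_apply, ← LinearMap.smul_apply]
          exact hwd2 _ (hrS _) _ (Submodule.smul_mem _ _ (hrS _)) (by simp [hr]) }
    have hφ : ∀ m ∈ S, φ (m x0) = m (tco F FF A x l) := fun m hm =>
      hwd2 _ (hrS _) _ hm (hr _)
    obtain ⟨c, hc⟩ := (hbase φ).1 ⟨by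
        intro a y
        have h1 := hφ _ (hSL a _ (hrS y))
        have h2 := hφ _ (hSR a _ (hrS y))
        simp only [Module.End.mul_apply, hr, LinearMap.mulLeft_apply,
          LinearMap.mulRight_apply] at h1 h2
        exact ⟨h1, h2⟩, by
        intro k y hy
        obtain ⟨f, hf⟩ := hdec _ (hrS y)
        have h1 := hind f (k * g⁻¹) y (by simpa using hy) (by rw [← hf, hr])
        have h2 := hφ _ (Submodule.mem_iSup_of_mem (k * g⁻¹) (f (k * g⁻¹)).2)
        rw [h1.1] at h2
        rw [h2]
        have := (f (k * g⁻¹)).2.2 g _ (tco_mem (𝒜 g) x hxg l)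
        simpa using this⟩
    refine ⟨c, ?_⟩
    have := hφ 1 h1S
    rw [hc] at this
    simpa using this.symm
  -- conclude
  choose c hc using hphi
  obtain ⟨s, hs⟩ := tco_expand x
  have hpure : ∃ d : FF, x = d ⊗ₜ[F] x0 := by
    refine ⟨∑ i ∈ s, c ((Module.Basis.ofVectorSpace F FF).coord i) •
      Module.Basis.ofVectorSpace F FF i, ?_⟩
    conv_lhs => rw [hs]
    rw [TensorProduct.sum_tmul]
    refine Finset.sum_congr rfl fun i _ => ?_
    rw [hc, TensorProduct.smul_tmul]
  obtain ⟨d, hd⟩ := hpure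
  have hd0 : d ≠ 0 := by
    rintro rfl
    apply hx0; rw [hd]; simp
  have h1 : (1 : FF) ⊗ₜ[F] x0 ∈ J := by
    have := J.smul_mem d⁻¹ hxJ
    rw [hd, TensorProduct.smul_tmul'] at this
    simpa [hd0] using this
  rw [eq_top_iff]
  intro y _
  induction y with
  | zero => simp
  | add x y hx hy => exact add_mem (hx trivial) (hy trivial)
  | tmul e a =>
    obtain ⟨m, hm, rfl⟩ := hsurj a
    have := J.smul_mem e (hSJ m hm _ h1)
    rw [LinearMap.baseChange_tmul, TensorProduct.smul_tmul'] at this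
    simpa using this

end ext

/-! ### Specializations of generic elements -/

section gen
variable {F : Type*} [Field F] {G : Type*} [CommGroup G] [DecidableEq G]
    {FF : Type*} [Field FF] [Algebra F FF]
    {A : Type*} [NonUnitalNonAssocRing A] [Module F A] [SMulCommClass F A A]
    [IsScalarTower F A A]

/-- specialization of the indeterminates -/
noncomputable def spec (A : Type*) [NonUnitalNonAssocRing A] [Module F A] (τ : G × ℕ × ℕ → FF) :
    MvPolynomial (G × ℕ × ℕ) F ⊗[F] A →ₗ[F] FF ⊗[F] A :=
  LinearMap.rTensor A (MvPolynomial.aeval (R := F) τ).toLinearMap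

lemma spec_tmul (τ : G × ℕ × ℕ → FF) (p : MvPolynomial (G × ℕ × ℕ) F) (a : A) :
    spec A τ (p ⊗ₜ[F] a) = (MvPolynomial.aeval τ p) ⊗ₜ[F] a := by
  simp [spec]

lemma spec_smul (τ : G × ℕ × ℕ → FF) (p : MvPolynomial (G × ℕ × ℕ) F)
    (x : MvPolynomial (G × ℕ × ℕ) F ⊗[F] A) :
    spec A τ (p • x) = MvPolynomial.aeval τ p • spec A τ x := by
  induction x with
  | zero => simp
  | tmul q a => simp [spec_tmul, TensorProduct.smul_tmul']
  | add x y hx hy => simp [hx, hy]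

lemma spec_mul (τ : G × ℕ × ℕ → FF)
    (x y : MvPolynomial (G × ℕ × ℕ) F ⊗[F] A) :
    spec A τ (x * y) = spec A τ x * spec A τ y := by
  induction x with
  | zero => simp
  | tmul q a =>
    induction y with
    | zero => simp
    | tmul q a => simp [spec_tmul]
    | add x y hx hy => simp [hx, hy, mul_add]
  | add x y hx hy => simp [hx, hy, add_mul]

/-- generic elements over the polynomial ring -/
noncomputable def gen' (𝒜 : G → Submodule F A) (nU : G → ℕ)
    (bU : ∀ g : G, Module.Basis (Fin (nU g)) F (𝒜 g)) (g : G) (i : ℕ) :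
    MvPolynomial (G × ℕ × ℕ) F ⊗[F] A :=
  ∑ j : Fin (nU g), (MvPolynomial.X (g, i, (j : ℕ))) ⊗ₜ[F] ((bU g j : A))

/-- algebra of generic elements over the polynomial ring -/
noncomputable def genAlg' (𝒜 : G → Submodule F A) (nU : G → ℕ)
    (bU : ∀ g : G, Module.Basis (Fin (nU g)) F (𝒜 g)) :
    NonUnitalSubalgebra F (MvPolynomial (G × ℕ × ℕ) F ⊗[F] A) :=
  NonUnitalAlgebra.adjoin F {x | ∃ (g : G) (i : Fin (nU g)), x = gen' 𝒜 nU bU g i}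

lemma spec_gen' (τ : G × ℕ × ℕ → FF) (𝒜 : G → Submodule F A) (nU : G → ℕ)
    (bU : ∀ g : G, Module.Basis (Fin (nU g)) F (𝒜 g)) (g : G) (i : ℕ) :
    spec A τ (gen' 𝒜 nU bU g i) =
      ∑ j : Fin (nU g), τ (g, i, (j : ℕ)) ⊗ₜ[F] ((bU g j : A)) := by
  simp [gen', spec_tmul]

lemma spec_mem (τ : G × ℕ × ℕ → FF) (𝒜 : G → Submodule F A) (nU : G → ℕ)
    (bU : ∀ g : G, Module.Basis (Fin (nU g)) F (𝒜 g)) (N : Submodule F (FF ⊗[F] A))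
    (hN : ∀ x ∈ N, ∀ y ∈ N, x * y ∈ N)
    (h : ∀ g, ∀ i : Fin (nU g), spec A τ (gen' 𝒜 nU bU g i) ∈ N)
    (r : MvPolynomial (G × ℕ × ℕ) F ⊗[F] A) (hr : r ∈ genAlg' 𝒜 nU bU) : spec A τ r ∈ N := by
  unfold genAlg' at hr
  induction hr using NonUnitalAlgebra.adjoin_induction with
  | mem x hx => obtain ⟨g, i, rfl⟩ := hx; exact h g i
  | add x y _ _ h1 h2 => rw [map_add]; exact N.add_mem h1 h2
  | zero => rw [map_zero]; exact N.zero_mem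
  | mul x y _ _ h1 h2 => rw [spec_mul]; exact hN _ h1 _ h2
  | smul c x _ h1 => rw [map_smul]; exact N.smul_mem c h1

variable [Algebra (MvPolynomial (G × ℕ × ℕ) F) FF]
    [IsScalarTower F (MvPolynomial (G × ℕ × ℕ) F) FF]

/-- the generic point -/
noncomputable def tpt (F : Type*) [Field F] (G FF : Type*) [Field FF]
    [Algebra (MvPolynomial (G × ℕ × ℕ) F) FF] (v : G × ℕ × ℕ) : FF :=
  algebraMap (MvPolynomial (G × ℕ × ℕ) F) FF (MvPolynomial.X v)

lemma aeval_tpt (p : MvPolynomial (G × ℕ × ℕ) F) :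
    MvPolynomial.aeval (tpt F G FF) p = algebraMap (MvPolynomial (G × ℕ × ℕ) F) FF p := by
  have : MvPolynomial.aeval (R := F) (tpt F G FF) =
      IsScalarTower.toAlgHom F (MvPolynomial (G × ℕ × ℕ) F) FF := by
    ext v; simp [tpt]
  rw [this]; simp

lemma generic_lift (𝒜 : G → Submodule F A) (nU : G → ℕ)
    (bU : ∀ g : G, Module.Basis (Fin (nU g)) F (𝒜 g)) (r : FF ⊗[F] A)
    (hr : r ∈ genericAlg F FF 𝒜 nU bU) :
    ∃ r' ∈ genAlg' 𝒜 nU bU, spec A (tpt F G FF) r' = r := by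
  unfold genericAlg at hr
  induction hr using NonUnitalAlgebra.adjoin_induction with
  | mem x hx =>
    obtain ⟨g, i, rfl⟩ := hx
    exact ⟨gen' 𝒜 nU bU g i, NonUnitalAlgebra.subset_adjoin F ⟨g, i, rfl⟩, spec_gen' _ _ _ _ _ _⟩
  | add x y _ _ h1 h2 =>
    obtain ⟨a, ha, rfl⟩ := h1
    obtain ⟨b, hb, rfl⟩ := h2
    exact ⟨a + b, add_mem ha hb, map_add _ _ _⟩
  | zero => exact ⟨0, zero_mem _, map_zero _⟩
  | mul x y _ _ h1 h2 =>
    obtain ⟨a, ha, rfl⟩ := h1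
    obtain ⟨b, hb, rfl⟩ := h2
    exact ⟨a * b, mul_mem ha hb, spec_mul _ _ _⟩
  | smul c x _ h1 =>
    obtain ⟨a, ha, rfl⟩ := h1
    exact ⟨c • a, SMulMemClass.smul_mem c ha, map_smul _ _ _⟩

lemma multAlg_spec (𝒜 : G → Submodule F A) (nU : G → ℕ)
    (bU : ∀ g : G, Module.Basis (Fin (nU g)) F (𝒜 g))
    (L : NonUnitalSubalgebra F (FF ⊗[F] A)) (hRL : genericAlg F FF 𝒜 nU bU ≤ L)
    (m : Module.End F ↥(genericAlg F FF 𝒜 nU bU))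
    (hm : m ∈ MultAlg F (A := ↥(genericAlg F FF 𝒜 nU bU))) :
    ∃ (m' : Module.End (MvPolynomial (G × ℕ × ℕ) F) (MvPolynomial (G × ℕ × ℕ) F ⊗[F] A))
      (M : Module.End FF (FF ⊗[F] A)),
      (∀ x : ↥(genericAlg F FF 𝒜 nU bU), M (x : FF ⊗[F] A) =
        ((m x : ↥(genericAlg F FF 𝒜 nU bU)) : FF ⊗[F] A)) ∧
      (∀ x, M (spec A (tpt F G FF) x) = spec A (tpt F G FF) (m' x)) ∧
      ∀ (τ : G × ℕ × ℕ → FF) (I : Submodule F (FF ⊗[F] A)), I ≤ L.toSubmodule →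
        (∀ a ∈ L, ∀ x ∈ I, a * x ∈ I ∧ x * a ∈ I) →
        (∀ g, ∀ i : Fin (nU g), spec A τ (gen' 𝒜 nU bU g i) ∈ I ∧
          spec A τ (gen' 𝒜 nU bU g i) ∈ genericAlg F FF 𝒜 nU bU) →
        ∃ N : Module.End FF (FF ⊗[F] A), (∀ x, N (spec A τ x) = spec A τ (m' x)) ∧
          (∀ y ∈ L, N y ∈ I) ∧ ∃ n ∈ MultAlg F (A := ↥(genericAlg F FF 𝒜 nU bU)),
            ∀ x : ↥(genericAlg F FF 𝒜 nU bU), N (x : FF ⊗[F] A) =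
              ((n x : ↥(genericAlg F FF 𝒜 nU bU)) : FF ⊗[F] A) := by
  have hsp : ∀ (τ : G × ℕ × ℕ → FF) (I : Submodule F (FF ⊗[F] A)), I ≤ L.toSubmodule →
        (∀ a ∈ L, ∀ x ∈ I, a * x ∈ I ∧ x * a ∈ I) →
        (∀ g, ∀ i : Fin (nU g), spec A τ (gen' 𝒜 nU bU g i) ∈ I ∧
          spec A τ (gen' 𝒜 nU bU g i) ∈ genericAlg F FF 𝒜 nU bU) →
        ∀ r ∈ genAlg' 𝒜 nU bU, spec A τ r ∈ I ∧ spec A τ r ∈ genericAlg F FF 𝒜 nU bU := by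
    intro τ I hIL hI hg r hr
    exact spec_mem τ 𝒜 nU bU (I ⊓ (genericAlg F FF 𝒜 nU bU).toSubmodule)
      (fun x hx y hy => ⟨(hI x (hIL hx.1) y hy.1).1, (genericAlg F FF 𝒜 nU bU).mul_mem hx.2 hy.2⟩)
      (fun g i => hg g i) r hr
  unfold MultAlg at hm
  induction hm using NonUnitalAlgebra.adjoin_induction with
  | mem x hx =>
    rcases hx with ⟨⟨a, ha⟩, rfl⟩ | ⟨⟨a, ha⟩, rfl⟩
    · obtain ⟨r, hr, rfl⟩ := generic_lift 𝒜 nU bU a ha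
      refine ⟨LinearMap.mulLeft _ r, LinearMap.mulLeft FF (spec A (tpt F G FF) r),
        fun x => by simp, fun x => by simp [spec_mul], fun τ I hIL hI hg => ?_⟩
      obtain ⟨h1, h2⟩ := hsp τ I hIL hI hg r hr
      exact ⟨LinearMap.mulLeft FF (spec A τ r), fun x => by simp [spec_mul],
        fun y hy => (hI y hy _ h1).2, LinearMap.mulLeft F ⟨_, h2⟩,
        NonUnitalAlgebra.subset_adjoin F (Or.inl ⟨_, rfl⟩), fun x => by simp⟩
    · obtain ⟨r, hr, rfl⟩ := generic_lift 𝒜 nU bU a ha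
      refine ⟨LinearMap.mulRight _ r, LinearMap.mulRight FF (spec A (tpt F G FF) r),
        fun x => by simp, fun x => by simp [spec_mul], fun τ I hIL hI hg => ?_⟩
      obtain ⟨h1, h2⟩ := hsp τ I hIL hI hg r hr
      exact ⟨LinearMap.mulRight FF (spec A τ r), fun x => by simp [spec_mul],
        fun y hy => (hI y hy _ h1).1, LinearMap.mulRight F ⟨_, h2⟩,
        NonUnitalAlgebra.subset_adjoin F (Or.inr ⟨_, rfl⟩), fun x => by simp⟩
  | add x y hx hy h1 h2 =>
    obtain ⟨m1, M1, h1, h1', h1''⟩ := h1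
    obtain ⟨m2, M2, h2, h2', h2''⟩ := h2
    refine ⟨m1 + m2, M1 + M2, fun x => by simp [h1, h2], fun x => by simp [h1', h2'],
      fun τ I hIL hI hg => ?_⟩
    obtain ⟨N1, k1, k1', n1, hn1, k1''⟩ := h1'' τ I hIL hI hg
    obtain ⟨N2, k2, k2', n2, hn2, k2''⟩ := h2'' τ I hIL hI hg
    exact ⟨N1 + N2, fun x => by simp [k1, k2], fun y hy => I.add_mem (k1' y hy) (k2' y hy),
      n1 + n2, add_mem hn1 hn2, fun x => by simp [k1'', k2'']⟩
  | zero =>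
    exact ⟨0, 0, fun x => by simp, fun x => by simp, fun τ I hIL hI hg =>
      ⟨0, fun x => by simp, fun y hy => by simp, 0, zero_mem _, fun x => by simp⟩⟩
  | mul x y hx hy h1 h2 =>
    obtain ⟨m1, M1, h1, h1', h1''⟩ := h1
    obtain ⟨m2, M2, h2, h2', h2''⟩ := h2
    refine ⟨m1 * m2, M1 * M2, fun x => by simp [h1, h2], fun x => by simp [h1', h2'],
      fun τ I hIL hI hg => ?_⟩
    obtain ⟨N1, k1, k1', n1, hn1, k1''⟩ := h1'' τ I hIL hI hg
    obtain ⟨N2, k2, k2', n2, hn2, k2''⟩ := h2'' τ I hIL hI hg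
    exact ⟨N1 * N2, fun x => by simp [k1, k2], fun y hy => k1' _ (hIL (k2' y hy)),
      n1 * n2, mul_mem hn1 hn2, fun x => by simp [k1'', k2'']⟩
  | smul c x hx h1 =>
    obtain ⟨m1, M1, h1, h1', h1''⟩ := h1
    refine ⟨c • m1, c • M1, fun x => by simp [h1], fun x => by simp [h1'],
      fun τ I hIL hI hg => ?_⟩
    obtain ⟨N1, k1, k1', n1, hn1, k1''⟩ := h1'' τ I hIL hI hg
    exact ⟨c • N1, fun x => by simp [k1], fun y hy => I.smul_mem c (k1' y hy),
      c • n1, SMulMemClass.smul_mem c hn1, fun x => by simp [k1'']⟩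

/-- the generic elements span the whole scalar extension -/
lemma span_generic (hinj : Function.Injective (algebraMap (MvPolynomial (G × ℕ × ℕ) F) FF))
    (𝒜 : G → Submodule F A) (hgr : IsAlgGrading F 𝒜) (nU : G → ℕ)
    (bU : ∀ g : G, Module.Basis (Fin (nU g)) F (𝒜 g)) :
    Submodule.span FF (genericAlg F FF 𝒜 nU bU : Set (FF ⊗[F] A)) = ⊤ := by
  classical
  have hu : ∀ g, ∀ k : Fin (nU g), (1 : FF) ⊗ₜ[F] (bU g k : A) ∈
      Submodule.span FF (genericAlg F FF 𝒜 nU bU : Set (FF ⊗[F] A)) := by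
    intro g k
    let MP : Matrix (Fin (nU g)) (Fin (nU g)) (MvPolynomial (G × ℕ × ℕ) F) :=
      Matrix.of fun i j => MvPolynomial.X (g, (i : ℕ), (j : ℕ))
    have hdet : MP.det ≠ 0 := by
      intro h
      have := congrArg (MvPolynomial.aeval (R := F)
        (fun v : G × ℕ × ℕ => if v.2.1 = v.2.2 then (1 : F) else 0)) h
      rw [AlgHom.map_det, map_zero] at this
      have h1 : (MvPolynomial.aeval (R := F)
        (fun v : G × ℕ × ℕ => if v.2.1 = v.2.2 then (1 : F) else 0)).mapMatrix MP = 1 := by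
        ext i j
        simp [MP, Matrix.one_apply, Fin.ext_iff]
      rw [h1, Matrix.det_one] at this
      exact one_ne_zero this
    let N : Matrix (Fin (nU g)) (Fin (nU g)) FF :=
      Matrix.of fun i j => tpt F G FF (g, (i : ℕ), (j : ℕ))
    have hN : N = (algebraMap (MvPolynomial (G × ℕ × ℕ) F) FF).mapMatrix MP := by
      ext i j; simp [N, MP, tpt]
    have hNdet : IsUnit N.det := by
      rw [hN, ← RingHom.map_det, isUnit_iff_ne_zero]
      intro h
      exact hdet (hinj (by rw [h, map_zero]))
    have hinv := Matrix.nonsing_inv_mul N hNdet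
    have : (1 : FF) ⊗ₜ[F] (bU g k : A) =
        ∑ i, N⁻¹ k i • ∑ j : Fin (nU g), tpt F G FF (g, (i : ℕ), (j : ℕ)) ⊗ₜ[F] ((bU g j : A)) := by
      simp_rw [Finset.smul_sum, TensorProduct.smul_tmul']
      rw [Finset.sum_comm]
      simp_rw [← TensorProduct.sum_tmul]
      have h2 : ∀ j : Fin (nU g), ∑ i, N⁻¹ k i • tpt F G FF (g, (i : ℕ), (j : ℕ)) =
          (1 : Matrix (Fin (nU g)) (Fin (nU g)) FF) k j := by
        intro j
        rw [← hinv, Matrix.mul_apply]; rfl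
      simp_rw [h2, Matrix.one_apply]
      rw [Finset.sum_eq_single k]
      · simp
      · intro j _ hj; simp [hj.symm]
      · simp
    rw [this]
    refine Submodule.sum_mem _ fun i _ => Submodule.smul_mem _ _ (Submodule.subset_span ?_)
    exact NonUnitalAlgebra.subset_adjoin F ⟨g, i, rfl⟩
  rw [eq_top_iff, ← (Algebra.TensorProduct.basis FF (hgr.1.collectedBasis bU)).span_eq,
    Submodule.span_le]
  rintro _ ⟨⟨g, k⟩, rfl⟩
  rw [Algebra.TensorProduct.basis_apply, hgr.1.collectedBasis_coe]
  exact hu g k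

end gen

section main
variable {F : Type*} [Field F] {G : Type*} [CommGroup G] [DecidableEq G]
    {FF : Type*} [Field FF] [Algebra F FF]
    {A : Type*} [NonUnitalNonAssocRing A] [Module F A] [SMulCommClass F A A]
    [IsScalarTower F A A]

/-- the basis of the scalar extension -/
noncomputable def bFF (FF : Type*) [CommRing FF] [Algebra F FF] {𝒜 : G → Submodule F A}
    (hgr : IsAlgGrading F 𝒜) {nU : G → ℕ}
    (bU : ∀ g : G, Module.Basis (Fin (nU g)) F (𝒜 g)) :
    Module.Basis (Σ g, Fin (nU g)) FF (FF ⊗[F] A) :=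
  Algebra.TensorProduct.basis FF (hgr.1.collectedBasis bU)

lemma bFF_apply (FF : Type*) [CommRing FF] [Algebra F FF] {𝒜 : G → Submodule F A}
    (hgr : IsAlgGrading F 𝒜) {nU : G → ℕ}
    (bU : ∀ g : G, Module.Basis (Fin (nU g)) F (𝒜 g)) (k) :
    bFF FF hgr bU k = (1 : FF) ⊗ₜ[F] (bU k.1 k.2 : A) := by
  rw [bFF, Algebra.TensorProduct.basis_apply, hgr.1.collectedBasis_coe]

/-- the projection onto a homogeneous component -/
noncomputable def proj {𝒜 : G → Submodule F A} (hgr : IsAlgGrading F 𝒜) {nU : G → ℕ}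
    (bU : ∀ g : G, Module.Basis (Fin (nU g)) F (𝒜 g)) (g : G) : Module.End FF (FF ⊗[F] A) :=
  ∑ j : Fin (nU g), ((bFF FF hgr bU).coord ⟨g, j⟩).smulRight ((1 : FF) ⊗ₜ[F] (bU g j : A))

lemma proj_apply {𝒜 : G → Submodule F A} (hgr : IsAlgGrading F 𝒜) {nU : G → ℕ}
    (bU : ∀ g : G, Module.Basis (Fin (nU g)) F (𝒜 g)) (g : G) (x : FF ⊗[F] A) :
    proj hgr bU g x = ∑ j : Fin (nU g), ((bFF FF hgr bU).repr x ⟨g, j⟩) ⊗ₜ[F] (bU g j : A) := by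
  simp [proj, TensorProduct.smul_tmul']

lemma proj_mem {𝒜 : G → Submodule F A} (hgr : IsAlgGrading F 𝒜) {nU : G → ℕ}
    (bU : ∀ g : G, Module.Basis (Fin (nU g)) F (𝒜 g)) (g : G) (x : FF ⊗[F] A) :
    proj hgr bU g x ∈ (𝒜 g).baseChange FF := by
  rw [proj_apply]
  exact Submodule.sum_mem _ fun j _ => Submodule.tmul_mem_baseChange_of_mem _ (bU g j).2

lemma proj_of_mem {𝒜 : G → Submodule F A} (hgr : IsAlgGrading F 𝒜) {nU : G → ℕ}
    (bU : ∀ g : G, Module.Basis (Fin (nU g)) F (𝒜 g)) (g h : G) (x : FF ⊗[F] A)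
    (hx : x ∈ (𝒜 h).baseChange FF) :
    proj hgr bU g x = if h = g then x else 0 := by
  have h1 : ((proj (FF := FF) hgr bU g).restrictScalars F) ∘ₗ (TensorProduct.mk F FF A 1) ∘ₗ
      (𝒜 h).subtype =
      if h = g then (TensorProduct.mk F FF A 1) ∘ₗ (𝒜 h).subtype else 0 := by
    apply (bU h).ext
    intro k
    have h2 := bFF_apply FF hgr bU ⟨h, k⟩
    simp only [LinearMap.comp_apply, Submodule.subtype_apply, TensorProduct.mk_apply,
      LinearMap.restrictScalars_apply]
    rw [proj_apply, ← h2, Module.Basis.repr_self]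
    split_ifs with hh
    · subst hh
      rw [Finset.sum_eq_single k]
      · simp [h2]
      · intro j _ hj
        rw [Finsupp.single_apply, if_neg, TensorProduct.zero_tmul]
        intro he
        apply hj
        simpa using he.symm
      · simp
    · refine Finset.sum_eq_zero fun j _ => ?_
      rw [Finsupp.single_apply, if_neg, TensorProduct.zero_tmul]
      intro he
      exact hh (congrArg Sigma.fst he)
  rw [Submodule.baseChange_eq_span] at hx
  induction hx using Submodule.span_induction with
  | mem x hx =>
    obtain ⟨a, ha, rfl⟩ := hx
    have := LinearMap.congr_fun h1 ⟨a, ha⟩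
    split_ifs at this ⊢ with hh <;> simpa using this
  | zero => simp
  | add x y _ _ h1 h2 => rw [map_add, h1, h2]; split_ifs <;> simp
  | smul c x _ h => rw [map_smul, h]; split_ifs <;> simp

lemma repr_spec [Algebra (MvPolynomial (G × ℕ × ℕ) F) FF]
    [IsScalarTower F (MvPolynomial (G × ℕ × ℕ) F) FF] {𝒜 : G → Submodule F A}
    (hgr : IsAlgGrading F 𝒜) {nU : G → ℕ}
    (bU : ∀ g : G, Module.Basis (Fin (nU g)) F (𝒜 g))
    (x : MvPolynomial (G × ℕ × ℕ) F ⊗[F] A) (k) :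
    (bFF FF hgr bU).repr (spec A (tpt F G FF) x) k =
      algebraMap (MvPolynomial (G × ℕ × ℕ) F) FF
        ((bFF (MvPolynomial (G × ℕ × ℕ) F) hgr bU).repr x k) := by
  induction x with
  | zero => simp
  | tmul p a =>
    simp only [spec_tmul, aeval_tpt, bFF, Algebra.TensorProduct.basis_repr_tmul,
      Finsupp.smul_apply, Finsupp.mapRange_apply, smul_eq_mul, map_mul]
    congr 1
    exact IsScalarTower.algebraMap_apply F (MvPolynomial (G × ℕ × ℕ) F) FF _
  | add x y hx hy => simp [hx, hy]

lemma spec_injective [Algebra (MvPolynomial (G × ℕ × ℕ) F) FF]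
    [IsScalarTower F (MvPolynomial (G × ℕ × ℕ) F) FF]
    (hinj : Function.Injective (algebraMap (MvPolynomial (G × ℕ × ℕ) F) FF)) :
    Function.Injective (spec (F := F) A (tpt F G FF)) := by
  apply Module.Flat.rTensor_preserves_injective_linearMap
  intro x y h
  apply hinj
  simpa [aeval_tpt] using h

lemma span_spec (τ : G × ℕ × ℕ → FF) (M N : Module.End FF (FF ⊗[F] A))
    (h : ∀ x, M (spec A τ x) = N (spec (F := F) A τ x)) : M = N := by
  apply LinearMap.ext
  intro x
  induction x with
  | zero => simp
  | tmul c a =>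
    have h1 := h (1 ⊗ₜ a)
    rw [spec_tmul, map_one] at h1
    have : c ⊗ₜ[F] a = c • ((1 : FF) ⊗ₜ[F] a) := by simp [TensorProduct.smul_tmul']
    rw [this, map_smul, map_smul, h1]
  | add x y hx hy => rw [map_add, map_add, hx, hy]

end main

/-- Generic-elements setup: the central localization `S_U⁻¹ F_U` of the algebra of generic
elements (realized inside `Ũ = FF ⊗ U` via the embedding `θ` of `Z_U = Z(M(F_U))_e` into `FF`)
is a `G`-graded simple algebra whose multiplication algebra satisfies an ordinary polynomial
identity. -/
theorem central_localization_of_generic_algebra_graded_simple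
    {F : Type*} [Field F] {G : Type*} [CommGroup G] [DecidableEq G]
    {FF : Type*} [Field FF] [Algebra F FF] [Algebra (MvPolynomial (G × ℕ × ℕ) F) FF]
    [IsScalarTower F (MvPolynomial (G × ℕ × ℕ) F) FF]
    (hinj : Function.Injective (algebraMap (MvPolynomial (G × ℕ × ℕ) F) FF))
    {A : Type*} [NonUnitalNonAssocRing A] [Module F A] [SMulCommClass F A A]
    [IsScalarTower F A A] [FiniteDimensional F A]
    (𝒜 : G → Submodule F A) (hgr : IsAlgGrading F 𝒜) (hsimp : IsGradedSimple F 𝒜)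
    (hbase : ∀ φ : Module.End F A,
      φ ∈ centroid F (A := A) ⊓ endGrading F 𝒜 1 ↔ ∃ c : F, φ = c • (1 : Module.End F A))
    (nU : G → ℕ) (bU : ∀ g : G, Module.Basis (Fin (nU g)) F (𝒜 g))
    -- `θ` is the embedding of `Z_U = Z(M(F_U))_e` into `FF`: the element `s ∈ Z_U` acts on
    -- `F_U ⊆ Ũ` as multiplication by the scalar `θ s`
    (θ : Module.End F ↥(genericAlg F FF 𝒜 nU bU) → FF)
    (hθ : ∀ s ∈ centerMultE F FF 𝒜 (genericAlg F FF 𝒜 nU bU),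
      ∀ x : ↥(genericAlg F FF 𝒜 nU bU), ((s x : ↥(genericAlg F FF 𝒜 nU bU)) : FF ⊗[F] A) =
        θ s • (x : FF ⊗[F] A))
    -- `L` is the central localization `S_U⁻¹ F_U`, as a subalgebra of `Ũ`
    (L : NonUnitalSubalgebra F (FF ⊗[F] A))
    (hL : (L : Set (FF ⊗[F] A)) =
      {y | ∃ s ∈ centerMultE F FF 𝒜 (genericAlg F FF 𝒜 nU bU), s ≠ 0 ∧
        ∃ x ∈ genericAlg F FF 𝒜 nU bU, y = (θ s)⁻¹ • x}) :
    -- `L = S_U⁻¹ F_U` is a graded simple algebra ...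
    ((∃ a ∈ L, ∃ b ∈ L, a * b ≠ 0) ∧
      ∀ I : Submodule F (FF ⊗[F] A), I ≤ L.toSubmodule →
        (∀ a ∈ L, ∀ x ∈ I, a * x ∈ I ∧ x * a ∈ I) →
        (I = ⨆ g, I ⊓ ((𝒜 g).baseChange FF).restrictScalars F) →
        I = ⊥ ∨ I = L.toSubmodule) ∧
    -- ... whose multiplication algebra satisfies an ordinary polynomial identity
    SatisfiesOrdinaryPI F (MultAlg F (A := ↥L) : Set (Module.End F ↥L)) := by

  classical
  refine ⟨?_, multAlg_PI L⟩
  have hspanR : Submodule.span FF (genericAlg F FF 𝒜 nU bU : Set (FF ⊗[F] A)) = ⊤ := span_generic hinj 𝒜 hgr nU bU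
  have hLmem : ∀ y, y ∈ L ↔ ∃ s ∈ centerMultE F FF 𝒜 (genericAlg F FF 𝒜 nU bU), s ≠ 0 ∧ ∃ x ∈ (genericAlg F FF 𝒜 nU bU), y = (θ s)⁻¹ • x := by
    intro y
    rw [← SetLike.mem_coe, hL]
    exact Iff.rfl
  obtain ⟨s0, hs0, hs0ne, -⟩ := (hLmem 0).1 (zero_mem L)
  have hθ0 : ∀ s ∈ centerMultE F FF 𝒜 (genericAlg F FF 𝒜 nU bU), s ≠ 0 → θ s ≠ 0 := by
    intro s hs hne h0
    apply hne
    ext x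
    have := hθ s hs x
    rw [h0, zero_smul] at this
    simpa using this
  have hRL : (genericAlg F FF 𝒜 nU bU) ≤ L := by
    intro x hx
    refine (hLmem x).2 ⟨s0, hs0, hs0ne, _, (s0 ⟨x, hx⟩).2, ?_⟩
    rw [hθ s0 hs0, smul_smul, inv_mul_cancel₀ (hθ0 s0 hs0 hs0ne), one_smul]
  have hspanL : Submodule.span FF (L : Set (FF ⊗[F] A)) = ⊤ := by
    rw [eq_top_iff, ← hspanR]
    exact Submodule.span_mono hRL
  have hscal : ∀ s ∈ centerMultE F FF 𝒜 (genericAlg F FF 𝒜 nU bU), ∀ M : Module.End FF (FF ⊗[F] A),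
      (∀ x : ↥(genericAlg F FF 𝒜 nU bU), M (x : FF ⊗[F] A) = ((s x : ↥(genericAlg F FF 𝒜 nU bU)) : FF ⊗[F] A)) → ∀ x, M x = θ s • x := by
    intro s hs M hM x
    have : M = θ s • (1 : Module.End FF (FF ⊗[F] A)) := by
      refine LinearMap.ext_on hspanR ?_
      intro x hx
      have := hM ⟨x, hx⟩
      rw [hθ s hs] at this
      simpa using this
    rw [this]; simp
  obtain ⟨a0, b0, hab0⟩ := hsimp.1
  have hinj1 : ∀ a : A, a ≠ 0 → (1 : FF) ⊗ₜ[F] a ≠ 0 := by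
    intro a ha h
    apply ha
    have h1 : LinearMap.rTensor A (Algebra.linearMap F FF) ((1 : F) ⊗ₜ[F] a) =
        LinearMap.rTensor A (Algebra.linearMap F FF) 0 := by
      simpa using h
    have h2 := Module.Flat.rTensor_preserves_injective_linearMap (M := A)
      (Algebra.linearMap F FF) (algebraMap F FF).injective h1
    simpa using congrArg (TensorProduct.lid F A) h2
  have hmul_span : ∀ (J : Submodule FF (FF ⊗[F] A)) (T : Set (FF ⊗[F] A)),
      (∀ a ∈ L, ∀ x ∈ T, a * x ∈ J ∧ x * a ∈ J) →
      ∀ u, ∀ x ∈ Submodule.span FF T, u * x ∈ J ∧ x * u ∈ J := by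
    intro J T hT u x hx
    have hu : u ∈ Submodule.span FF (L : Set (FF ⊗[F] A)) := by rw [hspanL]; trivial
    induction hx using Submodule.span_induction with
    | mem x hx =>
      induction hu using Submodule.span_induction with
      | mem u hu => exact hT u hu x hx
      | zero => simp
      | add a b _ _ h1 h2 =>
        rw [add_mul, mul_add]; exact ⟨add_mem h1.1 h2.1, add_mem h1.2 h2.2⟩
      | smul c a _ h =>
        rw [smul_mul_assoc, mul_smul_comm]
        exact ⟨J.smul_mem c h.1, J.smul_mem c h.2⟩
    | zero => simp
    | add a b _ _ h1 h2 =>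
      rw [add_mul, mul_add]; exact ⟨add_mem h1.1 h2.1, add_mem h1.2 h2.2⟩
    | smul c a _ h =>
      rw [smul_mul_assoc, mul_smul_comm]
      exact ⟨J.smul_mem c h.1, J.smul_mem c h.2⟩
  refine ⟨?_, ?_⟩
  · -- the product of `L` is nonzero
    by_contra! hzero
    have := (hmul_span ⊥ (L : Set (FF ⊗[F] A)) (fun a ha x hx => by
      simp [hzero a ha x hx, hzero x hx a ha]) ((1 : FF) ⊗ₜ[F] a0) ((1 : FF) ⊗ₜ[F] b0)
      (by rw [hspanL]; trivial)).1
    rw [Submodule.mem_bot, Algebra.TensorProduct.tmul_mul_tmul, one_mul] at this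
    exact hinj1 _ hab0 this
  intro I hIL hI hIhom
  by_cases hIbot : I = ⊥
  · exact Or.inl hIbot
  refine Or.inr (le_antisymm hIL ?_)
  -- the span of `I` is everything
  have hJ : Submodule.span FF (I : Set (FF ⊗[F] A)) = ⊤ := by
    refine ext_graded_simple 𝒜 hgr hsimp hbase _ ?_ ?_
    · intro a x hx
      exact hmul_span _ (I : Set (FF ⊗[F] A)) (fun a ha x hx =>
        ⟨Submodule.subset_span (hI a ha x hx).1, Submodule.subset_span (hI a ha x hx).2⟩) _ x hx
    · by_contra! hcon
      apply hIbot
      rw [hIhom, iSup_eq_bot]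
      intro g
      rw [eq_bot_iff]
      rintro x ⟨hx1, hx2⟩
      exact hcon g x (Submodule.subset_span hx1) hx2
  -- scaling
  have hscI : ∀ s ∈ centerMultE F FF 𝒜 (genericAlg F FF 𝒜 nU bU), ∀ x ∈ I, θ s • x ∈ I := by
    intro s hs x hx
    obtain ⟨M, hM, hMI⟩ := multAlg_extend (genericAlg F FF 𝒜 nU bU) s hs.1
    rw [← hscal s hs M hM x]
    exact hMI I (fun a ha x hx => hI a (hRL ha) x hx) x hx
  have hscR : ∀ s ∈ centerMultE F FF 𝒜 (genericAlg F FF 𝒜 nU bU), ∀ x ∈ (genericAlg F FF 𝒜 nU bU), θ s • x ∈ (genericAlg F FF 𝒜 nU bU) := by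
    intro s hs x hx
    have := hθ s hs ⟨x, hx⟩
    rw [← this]
    exact (s ⟨x, hx⟩).2
  have hscpow : ∀ n : ℕ, ∀ x, x ∈ I ∧ x ∈ (genericAlg F FF 𝒜 nU bU) → (θ s0) ^ n • x ∈ I ∧ (θ s0) ^ n • x ∈ (genericAlg F FF 𝒜 nU bU) := by
    intro n x hx
    induction n with
    | zero => simpa using hx
    | succ n ih =>
      rw [pow_succ', mul_smul]
      exact ⟨hscI s0 hs0 _ ih.1, hscR s0 hs0 _ ih.2⟩
  have hprojI : ∀ g, ∀ x ∈ I, proj hgr bU g x ∈ I := by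
    intro g x hx
    rw [hIhom] at hx
    induction hx using Submodule.iSup_induction' with
    | mem h x hx =>
      rw [proj_of_mem hgr bU g h x hx.2]
      split_ifs
      · exact hx.1
      · exact zero_mem _
    | zero => simp
    | add a b _ _ h1 h2 => rw [map_add]; exact add_mem h1 h2
  have hspang : ∀ g, ∀ y ∈ (𝒜 g).baseChange FF, y ∈ Submodule.span FF
      {x : FF ⊗[F] A | (x ∈ I ∧ x ∈ (genericAlg F FF 𝒜 nU bU)) ∧ x ∈ (𝒜 g).baseChange FF} := by
    intro g y hy
    have hp := proj_of_mem hgr bU g g y hy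
    rw [if_pos rfl] at hp
    rw [← hp]
    have hy' : y ∈ Submodule.span FF (I : Set (FF ⊗[F] A)) := by rw [hJ]; trivial
    clear hp hy
    induction hy' using Submodule.span_induction with
    | mem x hx =>
      have h1 := hprojI g x hx
      obtain ⟨s, hs, hsne, r, hr, hxr⟩ := (hLmem _).1 (hIL h1)
      have h2 : proj hgr bU g x = (θ s)⁻¹ • (θ s • proj hgr bU g x) := by
        rw [smul_smul, inv_mul_cancel₀ (hθ0 s hs hsne), one_smul]
      rw [h2]
      refine Submodule.smul_mem _ _ (Submodule.subset_span ⟨⟨hscI s hs _ h1, ?_⟩, ?_⟩)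
      · rw [hxr, smul_smul, mul_inv_cancel₀ (hθ0 s hs hsne), one_smul]; exact hr
      · exact Submodule.smul_mem _ _ (proj_mem hgr bU g x)
    | zero => simp
    | add a b _ _ h1 h2 => rw [map_add]; exact add_mem h1 h2
    | smul c a _ h => rw [map_smul]; exact Submodule.smul_mem _ _ h
  -- the scalar polynomial
  obtain ⟨m', M, hM1, hM2, hspec⟩ := multAlg_spec 𝒜 nU bU L hRL s0 hs0.1
  have hM3 := hscal s0 hs0 M hM1
  obtain ⟨p, hpθ, hpm⟩ : ∃ p : MvPolynomial (G × ℕ × ℕ) F,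
      algebraMap (MvPolynomial (G × ℕ × ℕ) F) FF p = θ s0 ∧ ∀ x, m' x = p • x := by
    have hnt : Nontrivial A := ⟨_, _, hab0⟩
    obtain ⟨k⟩ := (hgr.1.collectedBasis bU).index_nonempty
    have hb : spec A (tpt F G FF) (bFF (MvPolynomial (G × ℕ × ℕ) F) hgr bU k) =
        bFF FF hgr bU k := by
      rw [bFF_apply, bFF_apply, spec_tmul, map_one]
    have hpθ : algebraMap (MvPolynomial (G × ℕ × ℕ) F) FF
        ((bFF (MvPolynomial (G × ℕ × ℕ) F) hgr bU).repr
          (m' (bFF (MvPolynomial (G × ℕ × ℕ) F) hgr bU k)) k) = θ s0 := by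
      rw [← repr_spec (FF := FF), ← hM2, hM3, hb]
      simp
    refine ⟨_, hpθ, fun x => spec_injective hinj ?_⟩
    rw [← hM2, hM3, spec_smul, aeval_tpt, hpθ]
  have hp0 : p ≠ 0 := by
    rintro rfl
    apply hθ0 s0 hs0 hs0ne
    rw [← hpθ, map_zero]
  have hspec2 : ∀ (τ : G × ℕ × ℕ → FF) (N : Module.End FF (FF ⊗[F] A)),
      (∀ x, N (spec A τ x) = spec A τ (m' x)) → ∀ x, N x = MvPolynomial.aeval τ p • x := by
    intro τ N hN x
    have : N = MvPolynomial.aeval τ p • (1 : Module.End FF (FF ⊗[F] A)) := by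
      apply span_spec τ
      intro x
      rw [hN, hpm, spec_smul]; simp
    rw [this]; simp
  have hexL : ∃ y ∈ (genericAlg F FF 𝒜 nU bU), y ≠ 0 := by
    by_contra! h
    have h1 : Submodule.span FF (genericAlg F FF 𝒜 nU bU : Set (FF ⊗[F] A)) = ⊥ := by
      rw [Submodule.span_eq_bot]; exact h
    rw [h1] at hspanR
    have h2 : (1 : FF) ⊗ₜ[F] (a0 * b0) ∈ (⊥ : Submodule FF (FF ⊗[F] A)) := by
      rw [hspanR]; trivial
    exact hinj1 _ hab0 (by simpa using h2)
  obtain ⟨y0, hy0R, hy0⟩ := hexL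
  have hpconst : MvPolynomial.aeval (fun _ : G × ℕ × ℕ => (0 : FF)) p = 0 := by
    obtain ⟨N, hN1, hN2, -⟩ := hspec (fun _ => 0) ⊥ bot_le (by simp) (by
      intro g i
      rw [spec_gen']
      simp)
    have h1 := hN2 y0 (hRL hy0R)
    rw [hspec2 _ N hN1] at h1
    have h2 : MvPolynomial.aeval (fun _ : G × ℕ × ℕ => (0 : FF)) p • y0 = 0 := by simpa using h1
    exact (smul_eq_zero.1 h2).resolve_right hy0
  have hCinf : (Set.range fun n : ℕ => (θ s0) ^ n).Infinite := by
    apply Set.infinite_range_of_injective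
    have hnu : ¬ IsUnit p := by
      intro h
      have := h.map (MvPolynomial.aeval (R := F) (fun _ : G × ℕ × ℕ => (0 : FF)))
      rw [hpconst] at this
      exact not_isUnit_zero this
    intro a b hab
    apply pow_injective_of_not_isUnit hnu hp0
    apply hinj
    simpa [hpθ] using hab
  -- the generic elements as combinations of elements of `I`
  have hYmem : ∀ g i, spec A (tpt F G FF) (gen' 𝒜 nU bU g i) ∈ (𝒜 g).baseChange FF := by
    intro g i
    rw [spec_gen']
    exact Submodule.sum_mem _ fun j _ => Submodule.tmul_mem_baseChange_of_mem _ (bU g j).2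
  choose c hcs hc using fun g i => Submodule.mem_span_set.1 (hspang g _ (hYmem g i))
  let f : G × ℕ × ℕ → MvPolynomial (G × ℕ × (FF ⊗[F] A)) FF := fun v =>
    if h : v.2.2 < nU v.1 then
      ∑ z ∈ (c v.1 v.2.1).support, MvPolynomial.X (v.1, v.2.1, z) *
        MvPolynomial.C ((bFF FF hgr bU).repr z ⟨v.1, ⟨v.2.2, h⟩⟩)
    else MvPolynomial.C (tpt F G FF v)
  let q : MvPolynomial (G × ℕ × (FF ⊗[F] A)) FF := MvPolynomial.aeval f p
  have hqe : ∀ e : G × ℕ × (FF ⊗[F] A) → FF,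
      MvPolynomial.eval e q = MvPolynomial.aeval (fun v => MvPolynomial.eval e (f v)) p := by
    intro e
    have := MvPolynomial.comp_aeval_apply (R := F) f ((MvPolynomial.aeval (R := FF) e).restrictScalars F) p
    simpa [q, MvPolynomial.aeval_eq_eval] using this
  have hfe : ∀ (e : G × ℕ × (FF ⊗[F] A) → FF) (g : G) (i : ℕ) (j : Fin (nU g)),
      MvPolynomial.eval e (f (g, i, (j : ℕ))) =
        ∑ z ∈ (c g i).support, e (g, i, z) * (bFF FF hgr bU).repr z ⟨g, j⟩ := by
    intro e g i j
    simp [f]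
  have hq0 : q ≠ 0 := by
    intro h
    have h1 := hqe (fun v => c v.1 v.2.1 v.2.2)
    have h2 : (fun v => MvPolynomial.eval (fun v => c v.1 v.2.1 v.2.2) (f v)) = tpt F G FF := by
      funext v
      obtain ⟨g, i, j⟩ := v
      by_cases hj : j < nU g
      · have h3 := hfe (fun v => c v.1 v.2.1 v.2.2) g i ⟨j, hj⟩
        simp only at h3
        rw [h3]
        have h4 := congrArg (fun y => (bFF FF hgr bU).repr y ⟨g, ⟨j, hj⟩⟩) (hc g i)
        simp only [Finsupp.sum, map_sum, map_smul, Finsupp.coe_finset_sum, Finset.sum_apply,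
          Finsupp.smul_apply, smul_eq_mul] at h4
        rw [h4, repr_spec]
        rw [tpt]
        congr 1
        have h5 : gen' 𝒜 nU bU g i = ∑ j : Fin (nU g),
            (MvPolynomial.X (g, i, (j : ℕ)) : MvPolynomial (G × ℕ × ℕ) F) •
              bFF (MvPolynomial (G × ℕ × ℕ) F) hgr bU ⟨g, j⟩ := by
          simp [gen', bFF_apply, TensorProduct.smul_tmul']
        rw [h5]
        simp only [map_sum, map_smul, Module.Basis.repr_self, Finsupp.coe_finset_sum,
          Finset.sum_apply, Finsupp.smul_apply, smul_eq_mul]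
        rw [Finset.sum_eq_single ⟨j, hj⟩]
        · simp
        · intro k _ hk
          rw [Finsupp.single_apply, if_neg, mul_zero]
          intro he
          apply hk
          simpa using he
        · simp
      · simp [f, hj]
    rw [h2, aeval_tpt, h, map_zero] at h1
    exact hp0 (hinj (by rw [← h1, map_zero]))
  obtain ⟨e, heC, he⟩ : ∃ e : G × ℕ × (FF ⊗[F] A) → FF,
      (∀ v, e v ∈ Set.range fun n : ℕ => (θ s0) ^ n) ∧ MvPolynomial.eval e q ≠ 0 := by
    by_contra! hcon
    apply hq0
    apply MvPolynomial.funext_set (fun _ => Set.range fun n : ℕ => (θ s0) ^ n) (fun _ => hCinf)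
    intro e he
    rw [map_zero]
    exact hcon e fun v => he v trivial
  rw [hqe] at he
  obtain ⟨N, hN1, hN2, n, hn, hnN⟩ := hspec (fun v => MvPolynomial.eval e (f v)) I hIL hI (by
    intro g i
    have h1 : spec A (fun v => MvPolynomial.eval e (f v)) (gen' 𝒜 nU bU g i) =
        ∑ z ∈ (c g i).support, e (g, (i : ℕ), z) • z := by
      rw [spec_gen']
      simp_rw [hfe, TensorProduct.sum_tmul]
      rw [Finset.sum_comm]
      refine Finset.sum_congr rfl fun z hz => ?_
      have h2 := proj_of_mem hgr bU g g z (hcs g i hz).2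
      rw [if_pos rfl, proj_apply] at h2
      have h4 := congrArg (fun w => e (g, (i : ℕ), z) • w) h2
      simp only [Finset.smul_sum, TensorProduct.smul_tmul', smul_eq_mul] at h4
      exact h4
    rw [h1]
    have h3 : ∀ z ∈ (c g i).support, e (g, (i : ℕ), z) • z ∈ I ∧ e (g, (i : ℕ), z) • z ∈ (genericAlg F FF 𝒜 nU bU) := by
      intro z hz
      obtain ⟨k, hk⟩ := heC (g, (i : ℕ), z)
      rw [← hk]
      exact hscpow k z (hcs g i hz).1
    exact ⟨Submodule.sum_mem _ fun z hz => (h3 z hz).1, sum_mem fun z hz => (h3 z hz).2⟩)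
  have hN3 := hspec2 _ N hN1
  set d := MvPolynomial.aeval (fun v => MvPolynomial.eval e (f v)) p with hd
  have hnd : ∀ x : ↥(genericAlg F FF 𝒜 nU bU), ((n x : ↥(genericAlg F FF 𝒜 nU bU)) : FF ⊗[F] A) = d • (x : FF ⊗[F] A) := by
    intro x; rw [← hnN, hN3]
  -- conclusion
  intro y hy
  obtain ⟨t, ht, htne, r, hr, rfl⟩ := (hLmem y).1 hy
  have htn : ∀ x : ↥(genericAlg F FF 𝒜 nU bU), (((t * n) x : ↥(genericAlg F FF 𝒜 nU bU)) : FF ⊗[F] A) = (θ t * d) • (x : FF ⊗[F] A) := by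
    intro x
    rw [Module.End.mul_apply, hθ t ht, hnd, smul_smul]
  have hZ : t * n ∈ centerMultE F FF 𝒜 (genericAlg F FF 𝒜 nU bU) := by
    refine ⟨mul_mem ht.1 hn, ?_, ?_⟩
    · intro m hm
      obtain ⟨M', hM', -⟩ := multAlg_extend (genericAlg F FF 𝒜 nU bU) m hm
      ext x
      have e1 : ((t * n) * m) x = (t * n) (m x) := rfl
      have e2 : (m * (t * n)) x = m ((t * n) x) := rfl
      rw [e1, e2, htn, ← hM', ← hM', htn, map_smul]
    · intro g x hx
      change (((t * n) x : ↥(genericAlg F FF 𝒜 nU bU)) : FF ⊗[F] A) ∈ (𝒜 (1 * g)).baseChange FF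
      rw [htn, one_mul]
      exact Submodule.smul_mem _ _ hx
  have htd : θ t * d ≠ 0 := mul_ne_zero (hθ0 t ht htne) he
  have hθtn : θ (t * n) = θ t * d := by
    have h1 := hθ _ hZ ⟨y0, hy0R⟩
    rw [htn] at h1
    exact (smul_left_injective FF hy0 h1).symm
  have hw : (θ t * d)⁻¹ • r ∈ L := by
    refine (hLmem _).2 ⟨t * n, hZ, ?_, r, hr, by rw [hθtn]⟩
    intro h0
    have h1 := htn ⟨y0, hy0R⟩
    rw [h0] at h1
    exact smul_ne_zero htd hy0 (by simpa using h1.symm)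
  have h2 := hN2 _ hw
  rw [hN3, smul_smul, mul_inv, mul_comm (θ t)⁻¹, ← mul_assoc, mul_inv_cancel₀ he, one_mul] at h2
  exact h2
end

section
/- With the generic-elements setup (G abelian, U a G-graded simple algebra finite-dimensional over F = Γ(U)_e, F_U the algebra of generic elements inside Ũ = F̃ ⊗_F U, S_U = Z(M(F_U))_e \ {0}): the field K_U = Γ(S_U^{-1}F_U)_e, the identity component of the graded centroid of the central localization S_U^{-1}F_U, is isomorphic as an F-algebra to the field of fractions of Z_U = Z(M(F_U))_e. -/
section CentroidHelpers

open TensorProduct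

/-- in a graded simple algebra the two-sided annihilator is zero -/
theorem helper_ann_zero {F : Type*} [Field F] {G : Type*} [CommGroup G] [DecidableEq G]
    {A : Type*} [NonUnitalNonAssocRing A] [Module F A] [SMulCommClass F A A]
    [IsScalarTower F A A]
    (𝒜 : G → Submodule F A) (hgr : IsAlgGrading F 𝒜) (hsimp : IsGradedSimple F 𝒜)
    (w : A) (hw : ∀ u, w * u = 0 ∧ u * w = 0) : w = 0 := by
  classical
  letI : DirectSum.Decomposition 𝒜 := hgr.1.chooseDecomposition
  let I : Submodule F A :=
    { carrier := {w | ∀ u, w * u = 0 ∧ u * w = 0}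
      add_mem' := by
        intro a b ha hb u
        simp [add_mul, mul_add, (ha u).1, (ha u).2, (hb u).1, (hb u).2]
      zero_mem' := by intro u; simp
      smul_mem' := by
        intro c a ha u
        simp [smul_mul_assoc, mul_smul_comm, (ha u).1, (ha u).2] }
  have key : ∀ (g h : G) (x : A), x ∈ 𝒜 h → ∀ w : A,
      (DirectSum.decompose 𝒜 (w * x) (g * h) : A) = (DirectSum.decompose 𝒜 w g : A) * x ∧
      (DirectSum.decompose 𝒜 (x * w) (g * h) : A) = x * (DirectSum.decompose 𝒜 w g : A) := by
    intro g h x hx w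
    induction w using DirectSum.Decomposition.inductionOn 𝒜 with
    | zero => simp
    | @homogeneous i m =>
      have h1 := hgr.2 i h m m.2 x hx
      have h2 := hgr.2 h i x hx m m.2
      rw [mul_comm] at h2
      by_cases hig : i = g
      · subst hig
        rw [DirectSum.decompose_of_mem_same 𝒜 h1, DirectSum.decompose_of_mem_same 𝒜 h2,
          DirectSum.decompose_of_mem_same 𝒜 m.2]
        exact ⟨rfl, rfl⟩
      · have hne : i * h ≠ g * h := fun h' => hig (mul_right_cancel h')
        rw [DirectSum.decompose_of_mem_ne 𝒜 h1 hne, DirectSum.decompose_of_mem_ne 𝒜 h2 hne,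
          DirectSum.decompose_of_mem_ne 𝒜 m.2 hig]
        simp
    | add a b ha hb =>
      simp [add_mul, mul_add, DirectSum.decompose_add, ha.1, ha.2, hb.1, hb.2]
  have hcomp : ∀ w ∈ I, ∀ g, (DirectSum.decompose 𝒜 w g : A) ∈ I := by
    intro w hw g u
    induction u using DirectSum.Decomposition.inductionOn 𝒜 with
    | zero => simp
    | @homogeneous i m =>
      have := key g i m m.2 w
      rw [(hw m).1, (hw m).2] at this
      simpa using And.intro this.1.symm this.2.symm
    | add a b ha hb => simp [add_mul, mul_add, ha.1, ha.2, hb.1, hb.2]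
  rcases hsimp.2 I (by
      intro a x hx
      rw [(hx a).1, (hx a).2]
      exact ⟨I.zero_mem, I.zero_mem⟩) (by
      apply le_antisymm
      · intro w hw
        rw [← DirectSum.sum_support_decompose 𝒜 w]
        exact Submodule.sum_mem _ fun g _ =>
          Submodule.mem_iSup_of_mem g ⟨hcomp w hw g, (DirectSum.decompose 𝒜 w g).2⟩
      · exact iSup_le fun g => inf_le_left) with h | h
  · have : w ∈ I := hw
    rw [h] at this
    simpa using this
  · obtain ⟨a, b, hab⟩ := hsimp.1
    have : a ∈ I := by rw [h]; trivial
    exact absurd (this b).1 hab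

/-- contraction of `FF ⊗ A` with a functional on `FF` -/
noncomputable def helperCoord {F FF A : Type*} [Field F] [Field FF] [Algebra F FF]
    [NonUnitalNonAssocRing A] [Module F A] (f : FF →ₗ[F] F) : FF ⊗[F] A →ₗ[F] A :=
  (TensorProduct.lid F A).toLinearMap ∘ₗ LinearMap.rTensor A f

theorem helperCoord_tmul {F FF A : Type*} [Field F] [Field FF] [Algebra F FF]
    [NonUnitalNonAssocRing A] [Module F A] (f : FF →ₗ[F] F) (c : FF) (a : A) :
    helperCoord f (c ⊗ₜ[F] a) = f c • a := by
  simp [helperCoord]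

theorem helperCoord_mul {F FF A : Type*} [Field F] [Field FF] [Algebra F FF]
    [NonUnitalNonAssocRing A] [Module F A] [SMulCommClass F A A]
    [IsScalarTower F A A] (f : FF →ₗ[F] F) (w : FF ⊗[F] A) (u : A) :
    helperCoord f (w * (1 ⊗ₜ[F] u)) = helperCoord f w * u ∧
    helperCoord f ((1 ⊗ₜ[F] u) * w) = u * helperCoord f w := by
  induction w using TensorProduct.induction_on with
  | zero => simp
  | tmul c a => simp [helperCoord_tmul, smul_mul_assoc, mul_smul_comm]
  | add a b ha hb => simp only [add_mul, mul_add, map_add, ha.1, ha.2, hb.1, hb.2, and_self]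

theorem helperCoord_repr {F FF A : Type*} [Field F] [Field FF] [Algebra F FF]
    [NonUnitalNonAssocRing A] [Module F A] {ι : Type*} (b : Module.Basis ι F A)
    (f : FF →ₗ[F] F) (w : FF ⊗[F] A) (k : ι) :
    b.repr (helperCoord f w) k = f ((b.baseChange FF).repr w k) := by
  induction w using TensorProduct.induction_on with
  | zero => simp
  | tmul c a => simp [helperCoord_tmul, mul_comm, Module.Basis.baseChange_repr_tmul]
  | add x y hx hy => simp [hx, hy]

theorem helperCoord_baseChange {F FF A : Type*} [Field F] [Field FF] [Algebra F FF]
    [NonUnitalNonAssocRing A] [Module F A] (P : Submodule F A)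
    (f : FF →ₗ[F] F) (w : FF ⊗[F] A) (hw : w ∈ P.baseChange FF) :
    helperCoord f w ∈ P := by
  have aux : ∀ (d : FF) (x : FF ⊗[F] A), x ∈ P.baseChange FF → helperCoord f (d • x) ∈ P := by
    intro d x hx
    rw [Submodule.baseChange_eq_span] at hx
    induction hx using Submodule.span_induction generalizing d with
    | mem x hx =>
      obtain ⟨p, hp, rfl⟩ := hx
      simp only [TensorProduct.mk_apply, TensorProduct.smul_tmul', helperCoord_tmul]
      exact P.smul_mem _ hp
    | zero => simp
    | add x y _ _ hx hy => rw [smul_add, map_add]; exact P.add_mem (hx d) (hy d)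
    | smul c x _ hx => rw [smul_smul]; exact hx _
  simpa using aux 1 w hw

theorem helper_eq_zero {F FF A : Type*} [Field F] [Field FF] [Algebra F FF]
    [NonUnitalNonAssocRing A] [Module F A] (w : FF ⊗[F] A)
    (h : ∀ f : FF →ₗ[F] F, helperCoord f w = 0) : w = 0 := by
  let b := Module.Basis.ofVectorSpace F A
  apply (b.baseChange FF).repr.injective
  ext k
  rw [map_zero, Finsupp.zero_apply]
  refine (Module.forall_dual_apply_eq_zero_iff F _).1 fun f => ?_
  have := helperCoord_repr b f w k
  rw [h f] at this
  simpa using this.symm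

theorem helper_tensor_ann {F : Type*} [Field F] {G : Type*} [CommGroup G] [DecidableEq G]
    {FF : Type*} [Field FF] [Algebra F FF]
    {A : Type*} [NonUnitalNonAssocRing A] [Module F A] [SMulCommClass F A A]
    [IsScalarTower F A A]
    (𝒜 : G → Submodule F A) (hgr : IsAlgGrading F 𝒜) (hsimp : IsGradedSimple F 𝒜)
    (w : FF ⊗[F] A) (hw : ∀ u, w * u = 0 ∧ u * w = 0) : w = 0 := by
  refine helper_eq_zero w fun f => helper_ann_zero 𝒜 hgr hsimp _ fun u => ?_
  rw [← (helperCoord_mul f w u).1, ← (helperCoord_mul f w u).2, (hw _).1, (hw _).2]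
  simp

/-- the degree-one centroid of `FF ⊗ A` consists of scalars -/
theorem helper_scalar {F : Type*} [Field F] {G : Type*} [CommGroup G] [DecidableEq G]
    {FF : Type*} [Field FF] [Algebra F FF]
    {A : Type*} [NonUnitalNonAssocRing A] [Module F A] [SMulCommClass F A A]
    [IsScalarTower F A A]
    (𝒜 : G → Submodule F A)
    (hbase : ∀ φ : Module.End F A,
      φ ∈ centroid F (A := A) ⊓ endGrading F 𝒜 1 ↔ ∃ c : F, φ = c • (1 : Module.End F A))
    (Φ : FF ⊗[F] A →ₗ[FF] FF ⊗[F] A)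
    (hΦ : ∀ x y, Φ (x * y) = x * Φ y ∧ Φ (x * y) = Φ x * y)
    (hdeg : ∀ g, ∀ u ∈ 𝒜 g, Φ (1 ⊗ₜ u) ∈ (𝒜 g).baseChange FF) :
    ∃ c : FF, ∀ x, Φ x = c • x := by
  classical
  have hf : ∀ f : FF →ₗ[F] F, ∃ c : F, ∀ u : A, helperCoord f (Φ (1 ⊗ₜ u)) = c • u := by
    intro f
    let ψ : Module.End F A :=
      helperCoord f ∘ₗ Φ.restrictScalars F ∘ₗ (TensorProduct.mk F FF A 1)
    obtain ⟨c, hc⟩ := (hbase ψ).1 ⟨by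
        intro a x
        have e1 : ((1 : FF) ⊗ₜ[F] (a * x)) = (1 ⊗ₜ a) * (1 ⊗ₜ x) := by simp
        have e2 : ((1 : FF) ⊗ₜ[F] (x * a)) = (1 ⊗ₜ x) * (1 ⊗ₜ a) := by simp
        constructor
        · change helperCoord f (Φ (1 ⊗ₜ (a * x))) = a * helperCoord f (Φ (1 ⊗ₜ x))
          rw [e1, (hΦ _ _).1, (helperCoord_mul f _ _).2]
        · change helperCoord f (Φ (1 ⊗ₜ (x * a))) = helperCoord f (Φ (1 ⊗ₜ x)) * a
          rw [e2, (hΦ _ _).2, (helperCoord_mul f _ _).1], by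
        intro g x hx
        rw [one_mul]
        exact helperCoord_baseChange _ f _ (hdeg g x hx)⟩
    refine ⟨c, fun u => ?_⟩
    exact LinearMap.congr_fun hc u
  choose cf hcf using hf
  let b := Module.Basis.ofVectorSpace F A
  let B := b.baseChange FF
  have hrepr : ∀ (f : FF →ₗ[F] F) k l, f (B.repr (Φ (1 ⊗ₜ b k)) l) = cf f * (if k = l then 1 else 0) := by
    intro f k l
    rw [← helperCoord_repr b f, hcf f]
    simp [Finsupp.single_apply]
  have hoff : ∀ k l, k ≠ l → B.repr (Φ (1 ⊗ₜ b k)) l = 0 := fun k l hkl =>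
    (Module.forall_dual_apply_eq_zero_iff F _).1 fun f => by
      have := hrepr f k l
      simpa [hkl] using this
  have hdiag : ∀ k l, B.repr (Φ (1 ⊗ₜ b k)) k = B.repr (Φ (1 ⊗ₜ b l)) l := fun k l => by
    rw [← sub_eq_zero]
    refine (Module.forall_dual_apply_eq_zero_iff F _).1 fun f => ?_
    change f _ = 0
    rw [map_sub, hrepr, hrepr]
    simp
  have : ∃ c : FF, ∀ k, B.repr (Φ (1 ⊗ₜ b k)) k = c := by
    rcases isEmpty_or_nonempty (Module.Basis.ofVectorSpaceIndex F A) with h | ⟨⟨k0⟩⟩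
    · exact ⟨0, fun k => h.elim k⟩
    · exact ⟨_, fun k => hdiag k k0⟩
  obtain ⟨c, hc⟩ := this
  refine ⟨c, fun x => ?_⟩
  have : Φ = c • LinearMap.id := by
    refine B.ext fun k => ?_
    apply B.repr.injective
    ext l
    have hBk : B k = 1 ⊗ₜ b k := by simp [B]
    rw [LinearMap.smul_apply, LinearMap.id_apply, map_smul, B.repr_self, hBk]
    by_cases hkl : k = l
    · subst hkl; simp [hc]
    · simp [hoff k l hkl, Finsupp.single_apply, hkl]
  rw [this]; rfl

/-- the generic elements of degree `g` span the component of degree `g` -/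
theorem helper_generic_span
    {F : Type*} [Field F] {G : Type*} [CommGroup G] [DecidableEq G]
    {FF : Type*} [Field FF] [Algebra F FF] [Algebra (MvPolynomial (G × ℕ × ℕ) F) FF]
    [IsScalarTower F (MvPolynomial (G × ℕ × ℕ) F) FF]
    (hinj : Function.Injective (algebraMap (MvPolynomial (G × ℕ × ℕ) F) FF))
    {A : Type*} [NonUnitalNonAssocRing A] [Module F A]
    (𝒜 : G → Submodule F A)
    (nU : G → ℕ) (bU : ∀ g : G, Module.Basis (Fin (nU g)) F (𝒜 g)) (g : G) (u : A)
    (hu : u ∈ 𝒜 g) :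
    (1 : FF) ⊗ₜ[F] u ∈ Submodule.span FF
      (genericElems F FF 𝒜 nU bU ∩ ((𝒜 g).baseChange FF : Set (FF ⊗[F] A))) := by
  classical
  let M0 : Matrix (Fin (nU g)) (Fin (nU g)) (MvPolynomial (G × ℕ × ℕ) F) :=
    Matrix.of fun i j => MvPolynomial.X (g, (i : ℕ), (j : ℕ))
  have hM0 : M0.det ≠ 0 := by
    let r : Fin (nU g) × Fin (nU g) → G × ℕ × ℕ := fun p => (g, (p.1 : ℕ), (p.2 : ℕ))
    have hr : Function.Injective r := by
      rintro ⟨a, b⟩ ⟨c, d⟩ h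
      simp only [r, Prod.mk.injEq, true_and] at h
      exact Prod.ext (Fin.ext h.1) (Fin.ext h.2)
    have : M0 = (MvPolynomial.rename r : _ →ₐ[F] _).toRingHom.mapMatrix
        (Matrix.mvPolynomialX (Fin (nU g)) (Fin (nU g)) F) := by
      ext1 i j
      simp [M0, r, Matrix.mvPolynomialX]
    rw [this, ← RingHom.map_det]
    intro h0
    exact Matrix.det_mvPolynomialX_ne_zero (Fin (nU g)) F
      (MvPolynomial.rename_injective r hr (h0.trans (map_zero _).symm))
  let M : Matrix (Fin (nU g)) (Fin (nU g)) FF := (algebraMap _ FF).mapMatrix M0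
  have hM : IsUnit M.det := by
    rw [isUnit_iff_ne_zero, ← RingHom.map_det]
    exact fun h => hM0 (hinj (h.trans (map_zero _).symm))
  let y : Fin (nU g) → FF ⊗[F] A := fun i => ∑ j, M i j ⊗ₜ[F] (bU g j : A)
  have hy : ∀ i, y i ∈ genericElems F FF 𝒜 nU bU ∩ ((𝒜 g).baseChange FF : Set (FF ⊗[F] A)) := by
    intro i
    refine ⟨⟨g, i, rfl⟩, ?_⟩
    exact Submodule.sum_mem _ fun j _ => Submodule.tmul_mem_baseChange_of_mem _ (bU g j).2
  have hb : ∀ j, (1 : FF) ⊗ₜ[F] (bU g j : A) ∈ Submodule.span FF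
      (genericElems F FF 𝒜 nU bU ∩ ((𝒜 g).baseChange FF : Set (FF ⊗[F] A))) := by
    intro j
    have : (1 : FF) ⊗ₜ[F] (bU g j : A) = ∑ i, M⁻¹ j i • y i := by
      have h1 : ∀ i, M⁻¹ j i • y i = ∑ k, (M⁻¹ j i * M i k) ⊗ₜ[F] (bU g k : A) := by
        intro i
        simp only [y, Finset.smul_sum, TensorProduct.smul_tmul', smul_eq_mul]
      simp only [h1]
      rw [Finset.sum_comm]
      simp only [← TensorProduct.sum_tmul, ← Matrix.mul_apply, Matrix.nonsing_inv_mul M hM]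
      rw [Finset.sum_eq_single j]
      · simp
      · intro k _ hk; simp [Matrix.one_apply_ne hk.symm]
      · simp
    rw [this]
    exact Submodule.sum_mem _ fun i _ => Submodule.smul_mem _ _ (Submodule.subset_span (hy i))
  have hu' : u = ∑ j, (bU g).repr ⟨u, hu⟩ j • (bU g j : A) := by
    have := congrArg (Subtype.val) ((bU g).sum_repr ⟨u, hu⟩)
    rw [AddSubmonoidClass.coe_finsetSum] at this
    exact this.symm
  rw [hu', TensorProduct.tmul_sum]
  refine Submodule.sum_mem _ fun j _ => ?_
  rw [TensorProduct.tmul_smul]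
  exact Submodule.smul_of_tower_mem _ _ (hb j)

theorem helper_span_top {F : Type*} [Field F] {G : Type*} [CommGroup G] [DecidableEq G]
    {FF : Type*} [Field FF] [Algebra F FF]
    {A : Type*} [NonUnitalNonAssocRing A] [Module F A] [SMulCommClass F A A]
    [IsScalarTower F A A]
    (𝒜 : G → Submodule F A) (hgr : IsAlgGrading F 𝒜) (S : Submodule FF (FF ⊗[F] A))
    (h : ∀ g, ∀ u ∈ 𝒜 g, (1 : FF) ⊗ₜ[F] u ∈ S) : S = ⊤ := by
  have h1 : ∀ u : A, (1 : FF) ⊗ₜ[F] u ∈ S := by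
    intro u
    have hu : u ∈ ⨆ g, 𝒜 g := by rw [hgr.1.submodule_iSup_eq_top]; trivial
    induction hu using Submodule.iSup_induction' with
    | mem g x hx => exact h g x hx
    | zero => simp
    | add x y _ _ hx hy => rw [TensorProduct.tmul_add]; exact S.add_mem hx hy
  rw [eq_top_iff]
  rintro x -
  induction x using TensorProduct.induction_on with
  | zero => exact S.zero_mem
  | tmul c a =>
    have := S.smul_mem c (h1 a)
    simpa [TensorProduct.smul_tmul'] using this
  | add x y hx hy => exact S.add_mem hx hy

/-- degree-one centroid elements of a spanning subalgebra are scalars -/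
theorem helper_centroid_scalar {F : Type*} [Field F] {G : Type*} [CommGroup G] [DecidableEq G]
    {FF : Type*} [Field FF] [Algebra F FF]
    {A : Type*} [NonUnitalNonAssocRing A] [Module F A] [SMulCommClass F A A]
    [IsScalarTower F A A]
    (𝒜 : G → Submodule F A) (hgr : IsAlgGrading F 𝒜) (hsimp : IsGradedSimple F 𝒜)
    (hbase : ∀ φ : Module.End F A,
      φ ∈ centroid F (A := A) ⊓ endGrading F 𝒜 1 ↔ ∃ c : F, φ = c • (1 : Module.End F A))
    (L : NonUnitalSubalgebra F (FF ⊗[F] A))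
    (hspan : ∀ g, ∀ u ∈ 𝒜 g, (1 : FF) ⊗ₜ[F] u ∈ Submodule.span FF
      ((L : Set (FF ⊗[F] A)) ∩ ((𝒜 g).baseChange FF : Set (FF ⊗[F] A))))
    (φ : Module.End F ↥L)
    (hφ : φ ∈ centroid F (A := ↥L) ⊓ endGrading F (subComp F FF 𝒜 L) 1) :
    ∃ c : FF, ∀ x : ↥L, ((φ x : ↥L) : FF ⊗[F] A) = c • (x : FF ⊗[F] A) := by
  have htop : Submodule.span FF (L : Set (FF ⊗[F] A)) = ⊤ :=
    helper_span_top 𝒜 hgr _ fun g u hu =>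
      Submodule.span_mono Set.inter_subset_left (hspan g u hu)
  let ι : ↥L →ₗ[F] FF ⊗[F] A := L.toSubmodule.subtype
  have hι : ∀ x : ↥L, ι x = (x : FF ⊗[F] A) := fun x => rfl
  let μ : FF ⊗[F] ↥L →ₗ[FF] FF ⊗[F] A := LinearMap.liftBaseChange FF ι
  let ν : FF ⊗[F] ↥L →ₗ[FF] FF ⊗[F] A := LinearMap.liftBaseChange FF (ι ∘ₗ φ)
  have hμ1 : ∀ x : ↥L, μ (1 ⊗ₜ x) = (x : FF ⊗[F] A) := fun x => by simp [μ, hι]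
  have hν1 : ∀ x : ↥L, ν (1 ⊗ₜ x) = ((φ x : ↥L) : FF ⊗[F] A) := fun x => by simp [ν, hι]
  have hsurj : Function.Surjective μ := by
    rw [← LinearMap.range_eq_top, eq_top_iff, ← htop, Submodule.span_le]
    intro x hx
    exact ⟨1 ⊗ₜ ⟨x, hx⟩, hμ1 ⟨x, hx⟩⟩
  have hL1 : ∀ a x : ↥L, ((φ (a * x) : ↥L) : FF ⊗[F] A) = (a : FF ⊗[F] A) * (φ x : ↥L) := by
    intro a x; rw [(hφ.1 a x).1]; rfl
  have hL2 : ∀ a x : ↥L, ((φ (x * a) : ↥L) : FF ⊗[F] A) = ((φ x : ↥L) : FF ⊗[F] A) * a := by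
    intro a x; rw [(hφ.1 a x).2]; rfl
  have hcross : ∀ (z : FF ⊗[F] ↥L) (a : ↥L),
      ν z * (a : FF ⊗[F] A) = μ z * ((φ a : ↥L) : FF ⊗[F] A) ∧
      (a : FF ⊗[F] A) * ν z = ((φ a : ↥L) : FF ⊗[F] A) * μ z := by
    intro z a
    induction z using TensorProduct.induction_on with
    | zero => simp
    | tmul c x =>
      have e1 : μ (c ⊗ₜ x) = c • (x : FF ⊗[F] A) := by simp [μ, hι]
      have e2 : ν (c ⊗ₜ x) = c • ((φ x : ↥L) : FF ⊗[F] A) := by simp [ν, hι]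
      rw [e1, e2, smul_mul_assoc, smul_mul_assoc, mul_smul_comm, mul_smul_comm,
        ← hL2 a x, ← hL1 x a, ← hL1 a x, ← hL2 x a]
      exact ⟨rfl, rfl⟩
    | add x y hx hy => simp only [map_add, add_mul, mul_add, hx.1, hx.2, hy.1, hy.2, and_self]
  have hker : LinearMap.ker μ ≤ LinearMap.ker ν := by
    intro z hz
    rw [LinearMap.mem_ker] at hz ⊢
    refine helper_tensor_ann 𝒜 hgr hsimp _ fun u => ?_
    have hu : u ∈ Submodule.span FF (L : Set (FF ⊗[F] A)) := by rw [htop]; trivial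
    induction hu using Submodule.span_induction with
    | mem x hx =>
      have := hcross z ⟨x, hx⟩
      rw [hz] at this
      simpa using this
    | zero => simp
    | add x y _ _ hx hy => simp [mul_add, add_mul, hx.1, hx.2, hy.1, hy.2]
    | smul c x _ hx => simp [smul_mul_assoc, mul_smul_comm, hx.1, hx.2]
  let Φ : FF ⊗[F] A →ₗ[FF] FF ⊗[F] A :=
    (LinearMap.ker μ).liftQ ν hker ∘ₗ (μ.quotKerEquivOfSurjective hsurj).symm.toLinearMap
  have hΦ : ∀ z, Φ (μ z) = ν z := by
    intro z
    have : (μ.quotKerEquivOfSurjective hsurj).symm (μ z) = Submodule.Quotient.mk z := by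
      rw [LinearEquiv.symm_apply_eq]; rfl
    simp only [Φ, LinearMap.comp_apply, LinearEquiv.coe_coe, this]
    exact Submodule.liftQ_apply _ _ _
  have hΦL : ∀ x : ↥L, Φ x = ((φ x : ↥L) : FF ⊗[F] A) := by
    intro x; rw [← hμ1 x, hΦ, hν1]
  have hΦmul : ∀ x y, Φ (x * y) = x * Φ y ∧ Φ (x * y) = Φ x * y := by
    intro x y
    have hx : x ∈ Submodule.span FF (L : Set (FF ⊗[F] A)) := by rw [htop]; trivial
    have hy : y ∈ Submodule.span FF (L : Set (FF ⊗[F] A)) := by rw [htop]; trivial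
    induction hx using Submodule.span_induction with
    | mem x hx =>
      induction hy using Submodule.span_induction with
      | mem y hy =>
        have h1 := hΦL (⟨x, hx⟩ * ⟨y, hy⟩)
        have h2 := hΦL ⟨x, hx⟩
        have h3 := hΦL ⟨y, hy⟩
        have h4 := hL1 ⟨x, hx⟩ ⟨y, hy⟩
        have h5 := hL2 ⟨y, hy⟩ ⟨x, hx⟩
        constructor
        · exact h1.trans (h4.trans (congrArg (fun t => x * t) h3.symm))
        · exact h1.trans (h5.trans (congrArg (fun t => t * y) h2.symm))
      | zero => simp
      | add a b _ _ ha hb =>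
        constructor
        · simp only [mul_add, map_add, ha.1, hb.1]
        · simp only [mul_add, map_add, ha.2, hb.2]
      | smul c a _ ha =>
        constructor
        · simp only [mul_smul_comm, map_smul, ha.1]
        · simp only [mul_smul_comm, map_smul, ha.2]
    | zero => simp
    | add a b _ _ ha hb =>
      constructor
      · simp only [add_mul, map_add, ha.1, hb.1]
      · simp only [add_mul, map_add, ha.2, hb.2]
    | smul c a _ ha =>
      constructor
      · simp only [smul_mul_assoc, map_smul, ha.1]
      · simp only [smul_mul_assoc, map_smul, ha.2]
  have hdeg : ∀ g, ∀ u ∈ 𝒜 g, Φ (1 ⊗ₜ u) ∈ (𝒜 g).baseChange FF := by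
    intro g u hu
    have := hspan g u hu
    generalize (1 : FF) ⊗ₜ[F] u = t at this
    induction this using Submodule.span_induction with
    | mem x hx =>
      have h1 := hφ.2 g ⟨x, hx.1⟩ hx.2
      rw [one_mul] at h1
      rw [hΦL ⟨x, hx.1⟩]
      exact h1
    | zero => simp
    | add a b _ _ ha hb => rw [map_add]; exact Submodule.add_mem _ ha hb
    | smul c a _ ha => rw [map_smul]; exact Submodule.smul_mem _ _ ha
  obtain ⟨c, hc⟩ := helper_scalar 𝒜 hbase Φ hΦmul hdeg
  exact ⟨c, fun x => by rw [← hΦL, hc]⟩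

/-- elements of the multiplication algebra commute with outer scalars -/
theorem helper_mult_smul {F : Type*} [Field F]
    {FF : Type*} [Field FF] [Algebra F FF]
    {A : Type*} [NonUnitalNonAssocRing A] [Module F A] [SMulCommClass F A A]
    [IsScalarTower F A A]
    (L : NonUnitalSubalgebra F (FF ⊗[F] A)) (m : Module.End F ↥L)
    (hm : m ∈ MultAlg F (A := ↥L)) (d : FF) (x y : ↥L)
    (h : (y : FF ⊗[F] A) = d • (x : FF ⊗[F] A)) :
    ((m y : ↥L) : FF ⊗[F] A) = d • ((m x : ↥L) : FF ⊗[F] A) := by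
  unfold MultAlg at hm
  induction hm using NonUnitalAlgebra.adjoin_induction generalizing x y with
  | mem m hm =>
    rcases hm with ⟨a, rfl⟩ | ⟨a, rfl⟩
    · change (a : FF ⊗[F] A) * y = d • ((a : FF ⊗[F] A) * x)
      rw [h, mul_smul_comm]
    · change (y : FF ⊗[F] A) * a = d • ((x : FF ⊗[F] A) * a)
      rw [h, smul_mul_assoc]
  | zero => simp
  | add m n _ _ hm hn =>
    simp only [LinearMap.add_apply, NonUnitalSubalgebra.coe_add, hm x y h, hn x y h, smul_add]
  | mul m n _ _ hm hn => exact hm _ _ (hn x y h)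
  | smul r m _ hm =>
    simp only [LinearMap.smul_apply, NonUnitalSubalgebra.coe_smul, hm x y h]
    rw [smul_comm]

/-- scalar elements of the multiplication algebra are central of degree one -/
theorem helper_scalar_mem_center {F : Type*} [Field F] {G : Type*} [CommGroup G] [DecidableEq G]
    {FF : Type*} [Field FF] [Algebra F FF]
    {A : Type*} [NonUnitalNonAssocRing A] [Module F A] [SMulCommClass F A A]
    [IsScalarTower F A A] (𝒜 : G → Submodule F A)
    (L : NonUnitalSubalgebra F (FF ⊗[F] A)) (m : Module.End F ↥L)
    (hm : m ∈ MultAlg F (A := ↥L)) (d : FF)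
    (h : ∀ x : ↥L, ((m x : ↥L) : FF ⊗[F] A) = d • (x : FF ⊗[F] A)) :
    m ∈ centerMultE F FF 𝒜 L := by
  refine ⟨hm, fun m' hm' => ?_, ?_⟩
  · ext x
    change ((m (m' x) : ↥L) : FF ⊗[F] A) = ((m' (m x) : ↥L) : FF ⊗[F] A)
    rw [h, helper_mult_smul L m' hm' d x (m x) (h x)]
  · intro g x hx
    rw [one_mul]
    change ((m x : ↥L) : FF ⊗[F] A) ∈ (𝒜 g).baseChange FF
    rw [h]
    exact Submodule.smul_mem _ _ hx

end CentroidHelpers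

open TensorProduct

/-- Generic-elements setup: the field `K_U = Γ(S_U⁻¹F_U)_e` (the identity component of the graded
centroid of the central localization `L = S_U⁻¹F_U`) is isomorphic as an `F`-algebra to the field
of fractions of `Z_U = Z(M(F_U))_e` (realized inside `FF` via the embedding `θ`). -/
theorem centroid_of_localization_is_fraction_field_of_ZU
    {F : Type*} [Field F] {G : Type*} [CommGroup G] [DecidableEq G]
    {FF : Type*} [Field FF] [Algebra F FF] [Algebra (MvPolynomial (G × ℕ × ℕ) F) FF]
    [IsScalarTower F (MvPolynomial (G × ℕ × ℕ) F) FF]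
    (hinj : Function.Injective (algebraMap (MvPolynomial (G × ℕ × ℕ) F) FF))
    {A : Type*} [NonUnitalNonAssocRing A] [Module F A] [SMulCommClass F A A]
    [IsScalarTower F A A] [FiniteDimensional F A]
    (𝒜 : G → Submodule F A) (hgr : IsAlgGrading F 𝒜) (hsimp : IsGradedSimple F 𝒜)
    (hbase : ∀ φ : Module.End F A,
      φ ∈ centroid F (A := A) ⊓ endGrading F 𝒜 1 ↔ ∃ c : F, φ = c • (1 : Module.End F A))
    (nU : G → ℕ) (bU : ∀ g : G, Module.Basis (Fin (nU g)) F (𝒜 g))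
    (θ : Module.End F ↥(genericAlg F FF 𝒜 nU bU) → FF)
    (hθ : ∀ s ∈ centerMultE F FF 𝒜 (genericAlg F FF 𝒜 nU bU),
      ∀ x : ↥(genericAlg F FF 𝒜 nU bU), ((s x : ↥(genericAlg F FF 𝒜 nU bU)) : FF ⊗[F] A) =
        θ s • (x : FF ⊗[F] A))
    (L : NonUnitalSubalgebra F (FF ⊗[F] A))
    (hL : (L : Set (FF ⊗[F] A)) =
      {y | ∃ s ∈ centerMultE F FF 𝒜 (genericAlg F FF 𝒜 nU bU), s ≠ 0 ∧
        ∃ x ∈ genericAlg F FF 𝒜 nU bU, y = (θ s)⁻¹ • x}) :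
    ∃ η : Module.End F ↥L → FF,
      Set.InjOn η {φ | φ ∈ centroid F (A := ↥L) ⊓ endGrading F (subComp F FF 𝒜 L) 1} ∧
      η 0 = 0 ∧
      (∀ φ ∈ centroid F (A := ↥L) ⊓ endGrading F (subComp F FF 𝒜 L) 1,
        ∀ ψ ∈ centroid F (A := ↥L) ⊓ endGrading F (subComp F FF 𝒜 L) 1,
          η (φ + ψ) = η φ + η ψ ∧ η (φ * ψ) = η φ * η ψ) ∧
      (∀ c : F, ∀ φ ∈ centroid F (A := ↥L) ⊓ endGrading F (subComp F FF 𝒜 L) 1,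
          η (c • φ) = algebraMap F FF c * η φ) ∧
      -- the image of `K_U` is exactly the fraction field of `Z_U` inside `FF`
      (η '' {φ | φ ∈ centroid F (A := ↥L) ⊓ endGrading F (subComp F FF 𝒜 L) 1} =
        {c : FF | ∃ a ∈ centerMultE F FF 𝒜 (genericAlg F FF 𝒜 nU bU),
          ∃ b ∈ centerMultE F FF 𝒜 (genericAlg F FF 𝒜 nU bU), b ≠ 0 ∧ c = θ a / θ b}) := by
  classical
  have hgenR : genericElems F FF 𝒜 nU bU ⊆ (genericAlg F FF 𝒜 nU bU : Set (FF ⊗[F] A)) :=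
    NonUnitalAlgebra.subset_adjoin F
  generalize genericAlg F FF 𝒜 nU bU = R at *
  set Z := centerMultE F FF 𝒜 R with hZ
  have hLmem : ∀ y, y ∈ L ↔ ∃ s ∈ Z, s ≠ 0 ∧ ∃ x ∈ R, y = (θ s)⁻¹ • x := by
    intro y
    have := Set.ext_iff.1 hL y
    exact this
  -- a nonzero central element exists
  obtain ⟨s0, hs0, hs0ne, -⟩ := (hLmem 0).1 L.zero_mem
  obtain ⟨x0, hx0⟩ : ∃ x0 : ↥R, s0 x0 ≠ 0 := by
    by_contra! hcon
    exact hs0ne (LinearMap.ext hcon)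
  have hx0' : (x0 : FF ⊗[F] A) ≠ 0 := by
    intro h
    apply hx0
    have : x0 = 0 := Subtype.ext h
    rw [this, map_zero]
  have hθne : ∀ s ∈ Z, s ≠ 0 → θ s ≠ 0 := by
    intro s hs hne h0
    apply hne
    ext x
    rw [hθ s hs x, h0]
    simp
  have hθuniq : ∀ s ∈ Z, ∀ d : FF, (∀ x : ↥R, ((s x : ↥R) : FF ⊗[F] A) = d • (x : FF ⊗[F] A)) →
      θ s = d := by
    intro s hs d hd
    have h1 := hθ s hs x0
    rw [hd x0] at h1
    exact (smul_left_injective FF hx0' h1).symm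
  have hmulZ : ∀ s ∈ Z, ∀ t ∈ Z, s * t ∈ Z ∧ θ (s * t) = θ s * θ t := by
    intro s hs t ht
    have h1 : ∀ x : ↥R, (((s * t) x : ↥R) : FF ⊗[F] A) = (θ s * θ t) • (x : FF ⊗[F] A) := by
      intro x
      change ((s (t x) : ↥R) : FF ⊗[F] A) = _
      rw [hθ s hs, hθ t ht, smul_smul]
    have h2 : s * t ∈ Z := helper_scalar_mem_center 𝒜 R _ (mul_mem hs.1 ht.1) _ h1
    exact ⟨h2, hθuniq _ h2 _ h1⟩
  have hne_of : ∀ s ∈ Z, θ s ≠ 0 → s ≠ 0 := by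
    intro s hs h h0
    apply h
    exact hθuniq s hs 0 (fun x => by rw [h0]; simp)
  have hmulne : ∀ s ∈ Z, s ≠ 0 → ∀ t ∈ Z, t ≠ 0 → s * t ≠ 0 := by
    intro s hs hs' t ht ht'
    apply hne_of _ (hmulZ s hs t ht).1
    rw [(hmulZ s hs t ht).2]
    exact mul_ne_zero (hθne s hs hs') (hθne t ht ht')
  have hRL : ∀ x ∈ R, x ∈ L := by
    intro x hx
    refine (hLmem x).2 ⟨s0, hs0, hs0ne, (s0 ⟨x, hx⟩ : ↥R), (s0 ⟨x, hx⟩).2, ?_⟩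
    rw [hθ s0 hs0, smul_smul, inv_mul_cancel₀ (hθne s0 hs0 hs0ne), one_smul]
  have hgenL : genericElems F FF 𝒜 nU bU ⊆ (L : Set (FF ⊗[F] A)) := fun x hx =>
    hRL x (hgenR hx)
  have hscal : ∀ φ ∈ centroid F (A := ↥L) ⊓ endGrading F (subComp F FF 𝒜 L) 1,
      ∃ c : FF, ∀ x : ↥L, ((φ x : ↥L) : FF ⊗[F] A) = c • (x : FF ⊗[F] A) := fun φ hφ =>
    helper_centroid_scalar 𝒜 hgr hsimp hbase L (fun g u hu =>
      Submodule.span_mono (Set.inter_subset_inter_left _ hgenL)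
        (helper_generic_span hinj 𝒜 nU bU g u hu)) φ hφ
  let η : Module.End F ↥L → FF := fun φ =>
    if h : ∃ c : FF, ∀ x : ↥L, ((φ x : ↥L) : FF ⊗[F] A) = c • (x : FF ⊗[F] A) then h.choose else 0
  let xL : ↥L := ⟨x0, hRL x0 x0.2⟩
  have hη : ∀ (φ : Module.End F ↥L) (c : FF),
      (∀ x : ↥L, ((φ x : ↥L) : FF ⊗[F] A) = c • (x : FF ⊗[F] A)) → η φ = c := by
    intro φ c hc
    have h : ∃ c : FF, ∀ x : ↥L, ((φ x : ↥L) : FF ⊗[F] A) = c • (x : FF ⊗[F] A) := ⟨c, hc⟩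
    have e : η φ = h.choose := dif_pos h
    rw [e]
    have h1 := h.choose_spec xL
    rw [hc xL] at h1
    exact (smul_left_injective FF hx0' h1).symm
  have hηs : ∀ φ ∈ centroid F (A := ↥L) ⊓ endGrading F (subComp F FF 𝒜 L) 1,
      ∀ x : ↥L, ((φ x : ↥L) : FF ⊗[F] A) = η φ • (x : FF ⊗[F] A) := by
    intro φ hφ
    obtain ⟨c, hc⟩ := hscal φ hφ
    rw [hη φ c hc]
    exact hc
  refine ⟨η, ?_, ?_, ?_, ?_, ?_⟩
  · intro φ hφ ψ hψ h
    ext x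
    rw [hηs φ hφ, hηs ψ hψ, h]
  · exact hη 0 0 (fun x => by simp)
  · intro φ hφ ψ hψ
    constructor
    · refine hη _ _ fun x => ?_
      rw [add_smul, ← hηs φ hφ, ← hηs ψ hψ]; rfl
    · refine hη _ _ fun x => ?_
      rw [mul_smul, ← hηs ψ hψ, ← hηs φ hφ]; rfl
  · intro c φ hφ
    refine hη _ _ fun x => ?_
    rw [mul_smul, ← hηs φ hφ, algebraMap_smul]; rfl
  · ext c
    constructor
    · rintro ⟨φ, hφ, rfl⟩
      have hcs := hηs φ hφ
      generalize η φ = c at hcs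
      -- clear denominators of `c • m`
      have hclear : ∀ m ∈ MultAlg F (A := ↥R), ∃ s ∈ Z, s ≠ 0 ∧ ∃ m' ∈ MultAlg F (A := ↥R),
          ∀ x : ↥R, ((m' x : ↥R) : FF ⊗[F] A) = (c * θ s) • ((m x : ↥R) : FF ⊗[F] A) := by
        have hel : ∀ a : ↥R, ∃ s ∈ Z, s ≠ 0 ∧ ∃ a' : ↥R,
            (a' : FF ⊗[F] A) = (c * θ s) • (a : FF ⊗[F] A) := by
          intro a
          obtain ⟨s, hs, hne, a', ha', h⟩ := (hLmem _).1 (φ ⟨a, hRL a a.2⟩).2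
          refine ⟨s, hs, hne, ⟨a', ha'⟩, ?_⟩
          rw [hcs] at h
          change c • (a : FF ⊗[F] A) = _ at h
          change a' = _
          rw [mul_comm, mul_smul, h, smul_smul, mul_inv_cancel₀ (hθne s hs hne), one_smul]
        intro m hm
        unfold MultAlg at hm
        induction hm using NonUnitalAlgebra.adjoin_induction with
        | mem m hm =>
          rcases hm with ⟨a, rfl⟩ | ⟨a, rfl⟩
          · obtain ⟨s, hs, hne, a', ha'⟩ := hel a
            refine ⟨s, hs, hne, LinearMap.mulLeft F a',
              NonUnitalAlgebra.subset_adjoin F (Or.inl ⟨a', rfl⟩), fun x => ?_⟩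
            change (a' : FF ⊗[F] A) * x = _ • ((a : FF ⊗[F] A) * x)
            rw [ha', smul_mul_assoc]
          · obtain ⟨s, hs, hne, a', ha'⟩ := hel a
            refine ⟨s, hs, hne, LinearMap.mulRight F a',
              NonUnitalAlgebra.subset_adjoin F (Or.inr ⟨a', rfl⟩), fun x => ?_⟩
            change (x : FF ⊗[F] A) * a' = _ • ((x : FF ⊗[F] A) * a)
            rw [ha', mul_smul_comm]
        | zero => exact ⟨s0, hs0, hs0ne, 0, zero_mem _, fun x => by simp⟩
        | add m n _ _ hm hn =>
          obtain ⟨s, hs, hsne, m', hm', h1⟩ := hm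
          obtain ⟨t, ht, htne, n', hn', h2⟩ := hn
          refine ⟨s * t, (hmulZ s hs t ht).1, hmulne s hs hsne t ht htne, t * m' + s * n',
            add_mem (mul_mem ht.1 hm') (mul_mem hs.1 hn'), fun x => ?_⟩
          change ((t (m' x) : ↥R) : FF ⊗[F] A) + ((s (n' x) : ↥R) : FF ⊗[F] A)
            = _ • (((m x : ↥R) : FF ⊗[F] A) + ((n x : ↥R) : FF ⊗[F] A))
          rw [hθ t ht, hθ s hs, h1, h2, (hmulZ s hs t ht).2, smul_smul, smul_smul, smul_add]
          congr 2 <;> ring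
        | mul m n _ hn hm _ =>
          obtain ⟨s, hs, hsne, m', hm', h1⟩ := hm
          exact ⟨s, hs, hsne, m' * n, mul_mem hm' hn, fun x => h1 (n x)⟩
        | smul r m _ hm =>
          obtain ⟨s, hs, hsne, m', hm', h1⟩ := hm
          refine ⟨s, hs, hsne, r • m', SMulMemClass.smul_mem r hm', fun x => ?_⟩
          change r • ((m' x : ↥R) : FF ⊗[F] A) = _ • (r • ((m x : ↥R) : FF ⊗[F] A))
          rw [h1, smul_comm]
      obtain ⟨s, hs, hsne, m', hm', h1⟩ := hclear s0 hs0.1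
      have h2 : ∀ x : ↥R, ((m' x : ↥R) : FF ⊗[F] A) = (c * θ s * θ s0) • (x : FF ⊗[F] A) := by
        intro x
        rw [h1, hθ s0 hs0, smul_smul]
      have h3 : m' ∈ Z := helper_scalar_mem_center 𝒜 R m' hm' _ h2
      refine ⟨m', h3, s * s0, (hmulZ s hs s0 hs0).1, hmulne s hs hsne s0 hs0 hs0ne, ?_⟩
      rw [hθuniq m' h3 _ h2, (hmulZ s hs s0 hs0).2, mul_assoc,
        mul_div_cancel_right₀ _ (mul_ne_zero (hθne s hs hsne) (hθne s0 hs0 hs0ne))]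
    · rintro ⟨a, ha, b, hb, hbne, rfl⟩
      have hcl : ∀ y ∈ L, (θ a / θ b) • y ∈ L := by
        intro y hy
        obtain ⟨s, hs, hsne, x, hx, rfl⟩ := (hLmem y).1 hy
        refine (hLmem _).2 ⟨b * s, (hmulZ b hb s hs).1, hmulne b hb hbne s hs hsne,
          (a ⟨x, hx⟩ : ↥R), (a ⟨x, hx⟩).2, ?_⟩
        rw [hθ a ha, (hmulZ b hb s hs).2, smul_smul, smul_smul]
        congr 1
        rw [mul_inv, div_eq_mul_inv]
        ring
      let φ : Module.End F ↥L :=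
        { toFun := fun x => ⟨(θ a / θ b) • (x : FF ⊗[F] A), hcl x x.2⟩
          map_add' := fun x y => Subtype.ext (smul_add _ _ _)
          map_smul' := fun r x => Subtype.ext (smul_comm _ _ _) }
      have hφ : ∀ x : ↥L, ((φ x : ↥L) : FF ⊗[F] A) = (θ a / θ b) • (x : FF ⊗[F] A) := fun x => rfl
      refine ⟨φ, ⟨fun u x => ⟨Subtype.ext ?_, Subtype.ext ?_⟩, fun g x hx => ?_⟩, hη _ _ hφ⟩
      · change (θ a / θ b) • ((u : FF ⊗[F] A) * (x : FF ⊗[F] A)) =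
          (u : FF ⊗[F] A) * ((θ a / θ b) • (x : FF ⊗[F] A))
        rw [mul_smul_comm]
      · change (θ a / θ b) • ((x : FF ⊗[F] A) * (u : FF ⊗[F] A)) =
          ((θ a / θ b) • (x : FF ⊗[F] A)) * (u : FF ⊗[F] A)
        rw [smul_mul_assoc]
      · rw [one_mul]
        change ((φ x : ↥L) : FF ⊗[F] A) ∈ (𝒜 g).baseChange FF
        rw [hφ]
        exact Submodule.smul_mem _ _ hx
end
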